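/- arXiv:0807.3890 — 4 statements merged into one kernel-verified Lean document; each statement's English description precedes it below -/
import Mathlib

section
/- Let H be a Hopf monoid in a braided monoidal category C and δ a character of H, with δ-twisted antipode S̃. Then S̃ ∘ m = m ∘ ψ_{H,H} ∘ (S̃ ⊗ S̃) and S̃ ∘ m = m ∘ (S̃ ⊗ S̃) ∘ ψ_{H,H} as morphisms H ⊗ H → H. -/
open CategoryTheory MonoidalCategory

universe v u

/-- A Hopf algebra object (a "braided Hopf algebra") in a braided monoidal category `C`,
consisting of an object `X` with multiplication `mul`, unit `one`, comultiplication
`comul`, counit `counit` and antipode `antipode`, satisfying the usual axioms, with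
the compatibility of `mul` and `comul` expressed via the braiding. -/
structure HopfObj (C : Type u) [Category.{v} C] [MonoidalCategory C]
    [BraidedCategory C] where
  X : C
  mul : X ⊗ X ⟶ X
  one : 𝟙_ C ⟶ X
  comul : X ⟶ X ⊗ X
  counit : X ⟶ 𝟙_ C
  antipode : X ⟶ X
  mul_assoc : (mul ▷ X) ≫ mul = (α_ X X X).hom ≫ (X ◁ mul) ≫ mul
  one_mul : (one ▷ X) ≫ mul = (λ_ X).hom
  mul_one : (X ◁ one) ≫ mul = (ρ_ X).hom
  comul_assoc : comul ≫ (comul ▷ X) ≫ (α_ X X X).hom = comul ≫ (X ◁ comul)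
  counit_comul : comul ≫ (counit ▷ X) = (λ_ X).inv
  comul_counit : comul ≫ (X ◁ counit) = (ρ_ X).inv
  mul_comul : mul ≫ comul =
      (comul ⊗ₘ comul) ≫ (α_ X X (X ⊗ X)).hom ≫ (X ◁ (α_ X X X).inv) ≫
        (X ◁ ((β_ X X).hom ▷ X)) ≫ (X ◁ (α_ X X X).hom) ≫
        (α_ X X (X ⊗ X)).inv ≫ (mul ⊗ₘ mul)
  one_comul : one ≫ comul = (λ_ (𝟙_ C)).inv ≫ (one ⊗ₘ one)
  mul_counit : mul ≫ counit = (counit ⊗ₘ counit) ≫ (λ_ (𝟙_ C)).hom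
  one_counit : one ≫ counit = 𝟙 (𝟙_ C)
  antipode_left : comul ≫ (antipode ▷ X) ≫ mul = counit ≫ one
  antipode_right : comul ≫ (X ◁ antipode) ≫ mul = counit ≫ one

variable {C : Type u} [Category.{v} C] [MonoidalCategory C] [BraidedCategory C]

/-- The `δ`-twisted antipode `S̃ = λ_H ∘ (δ ⊗ S) ∘ Δ`. -/
def HopfObj.twist (A : _root_.HopfObj C) (δ : A.X ⟶ 𝟙_ C) : A.X ⟶ A.X :=
  A.comul ≫ (δ ⊗ₘ A.antipode) ≫ (λ_ A.X).hom

/-- `δ : H ⟶ 𝟙` is a character, i.e. a morphism of monoid objects. -/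
def HopfObj.IsCharacter (A : _root_.HopfObj C) (δ : A.X ⟶ 𝟙_ C) : Prop :=
  A.mul ≫ δ = (δ ⊗ₘ δ) ≫ (λ_ (𝟙_ C)).hom ∧ A.one ≫ δ = 𝟙 (𝟙_ C)

/-- `σ : 𝟙 ⟶ H` is a cocharacter, i.e. a morphism of comonoid objects. -/
def HopfObj.IsCocharacter (A : _root_.HopfObj C) (σ : 𝟙_ C ⟶ A.X) : Prop :=
  σ ≫ A.comul = (λ_ (𝟙_ C)).inv ≫ (σ ⊗ₘ σ) ∧ σ ≫ A.counit = 𝟙 (𝟙_ C)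

/-- The morphism `m ∘ (m ⊗ 1_H) ∘ ((S ∘ σ) ⊗ (S̃ ∘ S̃) ⊗ σ) : H ⟶ H`
(with unitors inserted). -/
def HopfObj.bmpiMap (A : _root_.HopfObj C) (δ : A.X ⟶ 𝟙_ C) (σ : 𝟙_ C ⟶ A.X) :
    A.X ⟶ A.X :=
  (λ_ A.X).inv ≫ ((σ ≫ A.antipode) ⊗ₘ (A.twist δ ≫ A.twist δ)) ≫
    (ρ_ (A.X ⊗ A.X)).inv ≫ ((A.X ⊗ A.X) ◁ σ) ≫ (A.mul ▷ A.X) ≫ A.mul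

/-- `(δ, σ)` is a braided modular pair in involution. -/
def HopfObj.IsBMPI (A : _root_.HopfObj C) (δ : A.X ⟶ 𝟙_ C) (σ : 𝟙_ C ⟶ A.X) : Prop :=
  σ ≫ δ = 𝟙 (𝟙_ C) ∧ A.bmpiMap δ σ = 𝟙 A.X

/-- Mathlib's Hopf monoid structure on `A.X`. -/
@[reducible] def HopfObj.toMathlib (A : _root_.HopfObj C) : CategoryTheory.HopfObj A.X where
  one := A.one
  mul := A.mul
  one_mul := A.one_mul
  mul_one := A.mul_one
  mul_assoc := A.mul_assoc
  counit := A.counit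
  comul := A.comul
  counit_comul := A.counit_comul
  comul_counit := A.comul_counit
  comul_assoc := by rw [← A.comul_assoc]
  mul_comul := by
    have h := A.mul_comul
    simp only [tensorμ, Category.assoc]
    exact h
  one_comul := A.one_comul
  mul_counit := A.mul_counit
  one_counit := A.one_counit
  antipode := A.antipode
  antipode_left := A.antipode_left
  antipode_right := A.antipode_right

theorem HopfObj.mul_antipode_aux (A : _root_.HopfObj C) :
    A.mul ≫ A.antipode = (A.antipode ⊗ₘ A.antipode) ≫ (β_ A.X A.X).hom ≫ A.mul :=
  @CategoryTheory.HopfObj.mul_antipode C _ _ _ A.X A.toMathlib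

theorem HopfObj.twist_mul_aux (A : _root_.HopfObj C) (δ : A.X ⟶ 𝟙_ C)
    (hδ : A.IsCharacter δ) :
    A.mul ≫ A.twist δ = (A.twist δ ⊗ₘ A.twist δ) ≫ (β_ A.X A.X).hom ≫ A.mul := by
  have hc : A.mul ≫ A.comul =
      (A.comul ⊗ₘ A.comul) ≫ tensorμ A.X A.X A.X A.X ≫ (A.mul ⊗ₘ A.mul) := by
    rw [A.mul_comul]; simp only [tensorμ, Category.assoc]
  have h1 : (A.mul ⊗ₘ A.mul) ≫ (δ ⊗ₘ A.antipode) =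
      ((δ ⊗ₘ δ) ⊗ₘ (A.antipode ⊗ₘ A.antipode)) ≫
        ((λ_ (𝟙_ C)).hom ⊗ₘ 𝟙 (A.X ⊗ A.X)) ≫ (𝟙_ C ◁ ((β_ A.X A.X).hom ≫ A.mul)) := by
    rw [tensorHom_comp_tensorHom, hδ.1, A.mul_antipode_aux, ← id_tensorHom,
      tensorHom_comp_tensorHom, tensorHom_comp_tensorHom]
    simp only [Category.id_comp, Category.comp_id]
  unfold HopfObj.twist
  rw [reassoc_of% hc, reassoc_of% h1, ← tensorμ_natural_assoc, leftUnitor_naturality,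
    ← tensorHom_comp_tensorHom, ← tensorHom_comp_tensorHom, leftUnitor_monoidal]
  simp only [Category.assoc, tensorHom_id]

/-- `S̃ ∘ m = m ∘ ψ ∘ (S̃ ⊗ S̃)` and `S̃ ∘ m = m ∘ (S̃ ⊗ S̃) ∘ ψ`. -/
theorem HopfObj.twist_mul (A : _root_.HopfObj C) (δ : A.X ⟶ 𝟙_ C)
    (hδ : A.IsCharacter δ) :
    A.mul ≫ A.twist δ = (A.twist δ ⊗ₘ A.twist δ) ≫ (β_ A.X A.X).hom ≫ A.mul ∧
    A.mul ≫ A.twist δ = (β_ A.X A.X).hom ≫ (A.twist δ ⊗ₘ A.twist δ) ≫ A.mul := by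
  have h := A.twist_mul_aux δ hδ
  refine ⟨h, h.trans ?_⟩
  rw [BraidedCategory.braiding_naturality_assoc]
end

section
/- Let H be a Hopf monoid in a braided monoidal category C and δ a character of H, with δ-twisted antipode S̃. Then Δ ∘ S̃ = ψ_{H,H} ∘ (S̃ ⊗ S) ∘ Δ and Δ ∘ S̃ = (S ⊗ S̃) ∘ ψ_{H,H} ∘ Δ as morphisms H → H ⊗ H. -/
open CategoryTheory MonoidalCategory

universe v u

variable {C : Type u} [Category.{v} C] [MonoidalCategory C] [BraidedCategory C]

theorem HopfObj.antipode_comul_aux (A : _root_.HopfObj C) :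
    A.antipode ≫ A.comul =
      A.comul ≫ (β_ A.X A.X).hom ≫ (A.antipode ⊗ₘ A.antipode) := by
  let i1 : MonObj A.X :=
    { one := A.one, mul := A.mul, one_mul := A.one_mul, mul_one := A.mul_one,
      mul_assoc := A.mul_assoc }
  let i2 : ComonObj A.X :=
    { counit := A.counit, comul := A.comul, counit_comul := A.counit_comul,
      comul_counit := A.comul_counit, comul_assoc := by
        rw [← A.comul_assoc] }
  let i3 : BimonObj A.X :=
    { i1, i2 with
      mul_comul := by
        refine A.mul_comul.trans ?_
        simp only [tensorμ, Category.assoc]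
        rfl
      one_comul := A.one_comul.trans rfl
      mul_counit := A.mul_counit.trans rfl
      one_counit := A.one_counit }
  let i4 : CategoryTheory.HopfObj A.X :=
    { i3 with
      antipode := A.antipode
      antipode_left := A.antipode_left
      antipode_right := A.antipode_right }
  exact CategoryTheory.HopfObj.antipode_comul A.X

/-- `Δ ∘ S̃ = ψ ∘ (S̃ ⊗ S) ∘ Δ` and `Δ ∘ S̃ = (S ⊗ S̃) ∘ ψ ∘ Δ`. -/
theorem HopfObj.comul_twist (A : _root_.HopfObj C) (δ : A.X ⟶ 𝟙_ C)
    (hδ : A.IsCharacter δ) :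
    A.twist δ ≫ A.comul = A.comul ≫ (A.twist δ ⊗ₘ A.antipode) ≫ (β_ A.X A.X).hom ∧
    A.twist δ ≫ A.comul = A.comul ≫ (β_ A.X A.X).hom ≫ (A.antipode ⊗ₘ A.twist δ) := by
  have h : A.twist δ ≫ A.comul =
      A.comul ≫ (A.twist δ ⊗ₘ A.antipode) ≫ (β_ A.X A.X).hom := by
    have e : A.comul ≫ (δ ⊗ₘ A.antipode) ≫ (λ_ A.X).hom ≫ A.comul =
        (A.comul ≫ (A.X ◁ A.comul)) ≫ (δ ▷ (A.X ⊗ A.X)) ≫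
          (λ_ (A.X ⊗ A.X)).hom ≫ (A.antipode ⊗ₘ A.antipode) ≫ (β_ A.X A.X).hom := by
      rw [← leftUnitor_naturality, MonoidalCategory.tensorHom_def]
      simp only [Category.assoc]
      rw [← MonoidalCategory.whiskerLeft_comp_assoc, A.antipode_comul_aux,
        ← BraidedCategory.braiding_naturality, whisker_exchange_assoc,
        leftUnitor_naturality, leftUnitor_naturality_assoc]
    unfold HopfObj.twist
    simp only [Category.assoc]
    rw [e, ← A.comul_assoc]
    simp only [Category.assoc]
    congr 1
    simp only [MonoidalCategory.tensorHom_def, comp_whiskerRight, Category.assoc]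
    congr 1
    simp only [← Category.assoc]
    congr 2
    simp
  refine ⟨h, ?_⟩
  rw [h, BraidedCategory.braiding_naturality]
end

section
/- Let H be a Hopf monoid in a braided monoidal category C (not assumed symmetric), and let (δ, σ) be a braided modular pair in involution for H. Then the cyclic operator τ₂ satisfies τ₂ ∘ τ₂ ∘ τ₂ = ψ_{H,H} ∘ ψ_{H,H} as endomorphisms of H ⊗ H. -/
open CategoryTheory MonoidalCategory

universe v u

variable {C : Type u} [Category.{v} C] [MonoidalCategory C] [BraidedCategory C]

/-- The cyclic operator `τ₂ = (m ⊗ m) ∘ (1_H ⊗ ψ ⊗ 1_H) ∘ ((Δ ∘ S̃) ⊗ 1_H ⊗ σ)`,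
with the `σ`-factor inserted via `H ⊗ H ≅ (H ⊗ H) ⊗ 𝟙`. -/
def HopfObj.tau2 (A : _root_.HopfObj C) (δ : A.X ⟶ 𝟙_ C) (σ : 𝟙_ C ⟶ A.X) :
    A.X ⊗ A.X ⟶ A.X ⊗ A.X :=
  (ρ_ (A.X ⊗ A.X)).inv ≫ (((A.twist δ ≫ A.comul) ⊗ₘ 𝟙 A.X) ⊗ₘ σ) ≫
    (((α_ A.X A.X A.X).hom ≫ (A.X ◁ (β_ A.X A.X).hom) ≫ (α_ A.X A.X A.X).inv) ▷ A.X) ≫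
    (α_ (A.X ⊗ A.X) A.X A.X).hom ≫ (A.mul ⊗ₘ A.mul)

set_option linter.unusedSimpArgs false
namespace BH
open MonObj ComonObj CategoryTheory.HopfObj BraidedCategory

section
variable (X : C) [CategoryTheory.HopfObj X]

def E : X ⊗ X ⟶ X ⊗ X :=
  Δ[X] ▷ X ≫ (α_ X X X).hom ≫ X ◁ (β_ X X).hom ≫ (α_ X X X).inv ≫ μ[X] ▷ X
def F : X ⊗ X ⟶ X ⊗ X := Δ[X] ▷ X ≫ (α_ X X X).hom ≫ X ◁ μ[X]
def G : X ⊗ X ⟶ X ⊗ X := Δ[X] ▷ X ≫ (α_ X X X).hom ≫ X ◁ (𝒮[X] ▷ X ≫ μ[X])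

theorem E_eq : E X = (Δ[X] ⊗ₘ ((ρ_ X).inv ≫ X ◁ η[X])) ≫ μ[X ⊗ X] := by
  symm
  simp only [E, MonObj.tensorObj.mul_def, tensorμ]
  calc _ = 𝟙 _ ⊗≫ Δ[X] ▷ X ⊗≫ X ◁ ((X ⊗ X) ◁ η[X] ≫ (β_ X X).hom ▷ X) ⊗≫
        μ[X] ▷ (X ⊗ X) ⊗≫ X ◁ μ[X] := by
          simp only [MonoidalCategory.tensorHom_def]; monoidal
    _ = 𝟙 _ ⊗≫ Δ[X] ▷ X ⊗≫ X ◁ ((β_ X X).hom) ⊗≫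
        ((X ⊗ X) ◁ (X ◁ η[X]) ≫ μ[X] ▷ (X ⊗ X)) ⊗≫ X ◁ μ[X] := by
          rw [whisker_exchange]; monoidal
    _ = 𝟙 _ ⊗≫ Δ[X] ▷ X ⊗≫ X ◁ ((β_ X X).hom) ⊗≫ μ[X] ▷ X ⊗≫
        X ◁ (X ◁ η[X] ≫ μ[X]) := by
          rw [whisker_exchange]; monoidal
    _ = _ := by
          rw [MonObj.mul_one]; monoidal

theorem F_eq : F X = (Δ[X] ⊗ₘ ((λ_ X).inv ≫ η[X] ▷ X)) ≫ μ[X ⊗ X] := by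
  symm
  simp only [F, MonObj.tensorObj.mul_def, tensorμ]
  calc _ = 𝟙 _ ⊗≫ Δ[X] ▷ X ⊗≫ X ◁ ((X ◁ η[X] ≫ (β_ X X).hom) ▷ X) ⊗≫
        (X ⊗ X) ◁ μ[X] ⊗≫ μ[X] ▷ X := by
          rw [MonoidalCategory.tensorHom_def, MonoidalCategory.tensorHom_def' μ[X]]; monoidal
    _ = 𝟙 _ ⊗≫ Δ[X] ▷ X ⊗≫ X ◁ (η[X] ▷ (X ⊗ X)) ⊗≫
        (X ⊗ X) ◁ μ[X] ⊗≫ μ[X] ▷ X := by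
          rw [braiding_naturality_right, braiding_tensorUnit_right]; monoidal
    _ = 𝟙 _ ⊗≫ Δ[X] ▷ X ⊗≫ ((X ◁ η[X]) ▷ (X ⊗ X) ≫
        (X ⊗ X) ◁ μ[X]) ⊗≫ μ[X] ▷ X := by
          monoidal
    _ = 𝟙 _ ⊗≫ Δ[X] ▷ X ⊗≫ X ◁ μ[X] ⊗≫ (X ◁ η[X] ≫ μ[X]) ▷ X := by
          rw [← whisker_exchange]; monoidal
    _ = _ := by
          rw [MonObj.mul_one]; monoidal

theorem GF : G X ≫ F X = 𝟙 _ := by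
  calc _ = 𝟙 _ ⊗≫ Δ[X] ▷ X ⊗≫ (X ◁ (𝒮[X] ▷ X ≫ μ[X]) ≫ Δ[X] ▷ X) ⊗≫ X ◁ μ[X] := by
          simp only [F, G]; monoidal
    _ = 𝟙 _ ⊗≫ (Δ[X] ≫ Δ[X] ▷ X ≫ (α_ X X X).hom) ▷ X ⊗≫ X ◁ (X ◁ 𝒮[X]) ▷ X ⊗≫ 
          X ◁ ((α_ X X X).hom ≫ X ◁ μ[X] ≫ μ[X]) := by
          rw [whisker_exchange]; monoidal
    _ = 𝟙 _ ⊗≫ Δ[X] ▷ X ⊗≫ X ◁ (Δ[X] ≫ (X ◁ 𝒮[X]) ≫ μ[X]) ▷ X ⊗≫ X ◁ μ[X] := by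
          rw [← comul_assoc, ← MonObj.mul_assoc]; monoidal
    _ = 𝟙 _ ⊗≫ (Δ[X] ≫ X ◁ ε[X]) ▷ X ⊗≫ X ◁ (η[X] ▷ X ≫ μ[X]) := by
          rw [antipode_right]; monoidal
    _ = _ := by rw [comul_counit, MonObj.one_mul]; monoidal

theorem comulG : Δ[X] ≫ G X = (ρ_ X).inv ≫ X ◁ η[X] := by
  simp only [G]
  rw [← comul_assoc_assoc]
  simp only [← MonoidalCategory.whiskerLeft_comp]
  rw [antipode_left]
  simp

theorem mulE : μ[X] ▷ X ≫ E X = (α_ X X X).hom ≫ (X ◁ E X) ≫ (Δ[X] ▷ (X ⊗ X)) ≫ μ[X ⊗ X] := by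
  have h : μ[X] ≫ Δ[X] = (Δ[X] ⊗ₘ Δ[X]) ≫ μ[X ⊗ X] := by
    rw [BimonObj.mul_comul, MonObj.tensorObj.mul_def]
  have h2 := MonObj.mul_assoc (X ⊗ X)
  rw [E_eq]
  calc _ = (μ[X] ≫ Δ[X]) ▷ X ≫ (X ⊗ X) ◁ ((ρ_ X).inv ≫ X ◁ η[X]) ≫ μ[X ⊗ X] := by
          rw [MonoidalCategory.tensorHom_def]; simp only [Category.assoc, comp_whiskerRight]
    _ = (Δ[X] ⊗ₘ Δ[X]) ▷ X ≫ ((X ⊗ X) ⊗ (X ⊗ X)) ◁ ((ρ_ X).inv ≫ X ◁ η[X]) ≫ μ[X ⊗ X] ▷ (X ⊗ X) ≫ μ[X ⊗ X] := by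
          rw [h, comp_whiskerRight_assoc, ← whisker_exchange_assoc]
    _ = (α_ X X X).hom ≫ (X ◁ (Δ[X] ⊗ₘ ((ρ_ X).inv ≫ X ◁ η[X]))) ≫ (Δ[X] ▷ ((X ⊗ X) ⊗ (X ⊗ X)) ≫ (X ⊗ X) ◁ μ[X ⊗ X]) ≫ μ[X ⊗ X] := by
          rw [h2]
          generalize (ρ_ X).inv ≫ X ◁ η[X] = g
          generalize μ[X ⊗ X] = M
          have e : (Δ[X] ⊗ₘ Δ[X]) ▷ X ≫ ((X ⊗ X) ⊗ (X ⊗ X)) ◁ g ≫ (α_ (X ⊗ X) (X ⊗ X) (X ⊗ X)).hom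
              = (α_ X X X).hom ≫ (X ◁ (Δ[X] ⊗ₘ g)) ≫ (Δ[X] ▷ ((X ⊗ X) ⊗ (X ⊗ X))) := by
            simp only [← id_tensorHom, ← tensorHom_id, tensorHom_comp_tensorHom, tensorHom_comp_tensorHom_assoc, Category.comp_id, Category.id_comp, Category.assoc]
            rw [← associator_naturality]
          rw [reassoc_of% e]; simp only [Category.assoc]
    _ = _ := by
          rw [← whisker_exchange]; simp only [Category.assoc, MonoidalCategory.whiskerLeft_comp]

variable {X}
theorem EG (t : X ⟶ X) (h : t ≫ Δ = Δ ≫ (β_ X X).hom ≫ (𝒮 ⊗ₘ t)) :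
    t ▷ X ≫ E X = G X ≫ t ▷ X ≫ (β_ X X).hom := by
  simp only [E, G]
  rw [← comp_whiskerRight_assoc, h]
  symm
  calc _ = Δ[X] ▷ X ≫ (α_ X X X).hom ≫ (X ◁ (𝒮[X] ▷ X)) ≫ (X ◁ μ[X] ≫ (β_ X X).hom) ≫ X ◁ t := by
          rw [braiding_naturality_left]; simp
    _ = Δ[X] ▷ X ≫ (α_ X X X).hom ≫ (β_ X (X ⊗ X)).hom ≫ 𝒮[X] ▷ X ▷ X ≫ μ[X] ▷ X ≫ X ◁ t := by
          rw [braiding_naturality_right, Category.assoc, braiding_naturality_right_assoc]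
    _ = Δ[X] ▷ X ≫ (β_ X X).hom ▷ X ≫ (α_ _ _ _).hom ≫ X ◁ (β_ X X).hom ≫ (α_ _ _ _).inv ≫ 𝒮[X] ▷ X ▷ X ≫ (X ⊗ X) ◁ t ≫ μ[X] ▷ X := by
          rw [braiding_tensor_right_hom, whisker_exchange]; simp
    _ = Δ[X] ▷ X ≫ (β_ X X).hom ▷ X ≫ (α_ _ _ _).hom ≫ X ◁ ((β_ X X).hom ≫ X ◁ t) ≫ (α_ _ _ _).inv ≫ 𝒮[X] ▷ X ▷ X ≫ μ[X] ▷ X := by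
          rw [← whisker_exchange_assoc]; monoidal
    _ = _ := by
          rw [← braiding_naturality_left, MonoidalCategory.tensorHom_def']
          have e : (α_ X X X).inv ≫ 𝒮[X] ▷ X ▷ X ≫ (α_ X X X).hom ≫ X ◁ (β_ X X).hom
              = X ◁ (β_ X X).hom ≫ (α_ X X X).inv ≫ 𝒮[X] ▷ X ▷ X ≫ (α_ X X X).hom := by
            have := whisker_exchange 𝒮[X] (β_ X X).hom
            simp only [whiskerRight_tensor, Category.assoc] at this
            simp [← this]
          simp [reassoc_of% e, -braiding_naturality_left, -braiding_naturality_left_assoc]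

theorem core (t : X ⟶ X) (h : t ≫ Δ = Δ ≫ (β_ X X).hom ≫ (𝒮 ⊗ₘ t))
    (h' : μ ≫ t = (t ⊗ₘ t) ≫ (β_ X X).hom ≫ μ) :
    G X ≫ (t ⊗ₘ t) ≫ (β_ X X).hom ≫ E X = (β_ X X).hom ≫ (t ⊗ₘ (t ≫ t)) ≫ F X := by
  have K : Δ[X] ≫ (t ⊗ₘ (𝒮 ≫ t)) ≫ (β_ X X).hom ≫ E X = t ≫ t ≫ (λ_ X).inv ≫ η[X] ▷ X := by
    calc _ = (Δ ≫ (β_ X X).hom ≫ (𝒮 ⊗ₘ t)) ≫ t ▷ X ≫ E X := by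
            rw [braiding_naturality_assoc]
            simp only [← id_tensorHom, ← tensorHom_id, tensorHom_comp_tensorHom, tensorHom_comp_tensorHom_assoc, Category.comp_id, Category.id_comp, Category.assoc]
      _ = t ≫ (Δ ≫ G X) ≫ t ▷ X ≫ (β_ X X).hom := by
            rw [← h, EG t h]; simp
      _ = t ≫ (ρ_ X).inv ≫ (X ◁ η[X] ≫ t ▷ X) ≫ (β_ X X).hom := by
            rw [comulG]; simp
      _ = _ := by
            rw [whisker_exchange]; simp
  calc _ = Δ[X] ▷ X ≫ (α_ X X X).hom ≫ X ◁ (𝒮[X] ▷ X) ≫ (t ⊗ₘ (μ ≫ t)) ≫ (β_ X X).hom ≫ E X := by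
          simp [G, MonoidalCategory.tensorHom_def']
    _ = Δ[X] ▷ X ≫ (α_ X X X).hom ≫ X ◁ (𝒮[X] ▷ X) ≫ (t ⊗ₘ (t ⊗ₘ t)) ≫ X ◁ (β_ X X).hom ≫ (β_ X (X ⊗ X)).hom ≫ μ[X] ▷ X ≫ E X := by
          rw [h', ← braiding_naturality_right_assoc]
          simp only [← id_tensorHom, ← tensorHom_id, tensorHom_comp_tensorHom, tensorHom_comp_tensorHom_assoc, Category.comp_id, Category.id_comp, Category.assoc]
    _ = Δ[X] ▷ X ≫ ((t ⊗ₘ (𝒮 ≫ t)) ⊗ₘ t) ≫ (α_ X X X).hom ≫ X ◁ (β_ X X).hom ≫ (β_ X (X ⊗ X)).hom ≫ (α_ X X X).hom ≫ (X ◁ E X) ≫ (Δ[X] ▷ (X ⊗ X)) ≫ μ[X ⊗ X] := by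
          rw [mulE, associator_naturality_assoc]
          simp only [← id_tensorHom, ← tensorHom_id, tensorHom_comp_tensorHom, tensorHom_comp_tensorHom_assoc, Category.comp_id, Category.id_comp, Category.assoc]
    _ = Δ[X] ▷ X ≫ ((t ⊗ₘ (𝒮 ≫ t)) ⊗ₘ t) ≫ (β_ (X ⊗ X) X).hom ≫ X ◁ (β_ X X).hom ≫ (X ◁ E X) ≫ (Δ[X] ▷ (X ⊗ X)) ≫ μ[X ⊗ X] := by
          have yb : (α_ X X X).hom ≫ X ◁ (β_ X X).hom ≫ (β_ X (X ⊗ X)).hom ≫ (α_ X X X).hom = (β_ (X ⊗ X) X).hom ≫ X ◁ (β_ X X).hom := by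
            rw [braiding_naturality_right_assoc, braiding_tensor_left_hom, braiding_tensor_right_hom]
            have := yang_baxter X X X
            simp only [Category.assoc] at this ⊢
            rw [this]
          rw [reassoc_of% yb]
    _ = (β_ X X).hom ≫ (t ⊗ₘ (Δ[X] ≫ (t ⊗ₘ (𝒮 ≫ t)) ≫ (β_ X X).hom ≫ E X)) ≫ (Δ[X] ▷ (X ⊗ X)) ≫ μ[X ⊗ X] := by
          rw [braiding_naturality_assoc, braiding_naturality_left_assoc]
          simp only [← id_tensorHom, ← tensorHom_id, tensorHom_comp_tensorHom, tensorHom_comp_tensorHom_assoc, Category.comp_id, Category.id_comp, Category.assoc]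
    _ = _ := by
          rw [K, F_eq]
          simp only [← id_tensorHom, ← tensorHom_id, tensorHom_comp_tensorHom, tensorHom_comp_tensorHom_assoc, Category.comp_id, Category.id_comp, Category.assoc]

theorem F_dbl (hm : (β_ X X).hom ≫ (β_ X X).hom ≫ μ[X] = μ[X])
    (hc : Δ[X] ≫ (β_ X X).hom ≫ (β_ X X).hom = Δ[X]) :
    (β_ X X).hom ≫ (β_ X X).hom ≫ F X = F X ≫ (β_ X X).hom ≫ (β_ X X).hom := by
  obtain ⟨a, ha⟩ : ∃ a, a = (β_ X X).hom ▷ X := ⟨_, rfl⟩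
  obtain ⟨b, hb⟩ : ∃ b, b = (α_ X X X).hom ≫ X ◁ (β_ X X).hom ≫ (α_ X X X).inv := ⟨_, rfl⟩
  have yb : a ≫ b ≫ a = b ≫ a ≫ b := by
    have := yang_baxter X X X
    rw [← cancel_epi (α_ X X X).hom, ← cancel_mono (α_ X X X).inv] at this
    simp only [ha, hb]
    simpa using this
  have hp : (α_ X X X).hom ≫ (β_ X (X ⊗ X)).hom = a ≫ b := by
    rw [braiding_tensor_right_hom, ha, hb]; simp
  have hq : (β_ (X ⊗ X) X).hom = b ≫ a ≫ (α_ X X X).hom := by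
    rw [braiding_tensor_left_hom, ha, hb]; simp
  have hbα : b ≫ (α_ X X X).hom = (α_ X X X).hom ≫ X ◁ (β_ X X).hom := by
    rw [hb]; simp
  have ft : a ≫ a ≫ b ≫ a ≫ a ≫ b = a ≫ b ≫ b ≫ a ≫ b ≫ b := by
    rw [reassoc_of% yb]
    have e : a ≫ b ≫ a ≫ b = b ≫ a ≫ b ≫ b := by rw [reassoc_of% yb]
    rw [e]
  calc _ = Δ[X] ▷ X ≫ (β_ (X ⊗ X) X).hom ≫ (β_ X (X ⊗ X)).hom ≫ (α_ X X X).hom ≫ X ◁ μ[X] := by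
          rw [F, ← braiding_naturality_right_assoc, braiding_naturality_left_assoc]
    _ = (Δ[X] ≫ (β_ X X).hom ≫ (β_ X X).hom) ▷ X ≫ b ≫ a ≫ (a ≫ b) ≫ (α_ X X X).hom ≫ X ◁ μ[X] := by
          rw [hc, hq, ← hp]; simp only [Category.assoc]
    _ = Δ[X] ▷ X ≫ (a ≫ a ≫ b ≫ a ≫ a ≫ b) ≫ (α_ X X X).hom ≫ X ◁ μ[X] := by
          simp only [ha, Category.assoc, comp_whiskerRight]
    _ = Δ[X] ▷ X ≫ (a ≫ b) ≫ (b ≫ a ≫ (α_ X X X).hom) ≫ X ◁ ((β_ X X).hom ≫ (β_ X X).hom ≫ μ[X]) := by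
          rw [ft]
          simp only [Category.assoc, reassoc_of% hbα, MonoidalCategory.whiskerLeft_comp]
    _ = _ := by
          rw [hm, ← hp, ← hq, F]
          simp only [Category.assoc]
          rw [braiding_naturality_right_assoc, braiding_naturality_left]

theorem main_abs (t R : X ⟶ X) (h : t ≫ Δ = Δ ≫ (β_ X X).hom ≫ (𝒮 ⊗ₘ t))
    (h' : μ ≫ t = (t ⊗ₘ t) ≫ (β_ X X).hom ≫ μ)
    (hR : μ[X] ≫ R = X ◁ R ≫ μ[X])
    (hcomb : ((t ≫ R ≫ t) ⊗ₘ (t ≫ t ≫ R)) ≫ F X ≫ R ▷ X = F X)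
    (hm : (β_ X X).hom ≫ (β_ X X).hom ≫ μ[X] = μ[X])
    (hc : Δ[X] ≫ (β_ X X).hom ≫ (β_ X X).hom = Δ[X]) (τ : X ⊗ X ⟶ X ⊗ X)
    (hτ : τ = t ▷ X ≫ E X ≫ X ◁ R) :
    τ ≫ τ ≫ τ = (β_ X X).hom ≫ (β_ X X).hom := by
  have h1 : τ = G X ≫ (t ≫ R) ▷ X ≫ (β_ X X).hom := by
    rw [hτ, reassoc_of% (EG t h), comp_whiskerRight_assoc, braiding_naturality_left]
  have hER : X ◁ R ≫ E X = E X ≫ R ▷ X := by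
    have e : X ◁ X ◁ R ≫ X ◁ (β_ X X).hom ≫ (α_ X X X).inv ≫ μ[X] ▷ X
        = X ◁ (β_ X X).hom ≫ (α_ X X X).inv ≫ (X ◁ R ≫ μ[X]) ▷ X := by
      rw [← MonoidalCategory.whiskerLeft_comp_assoc, braiding_naturality_right]
      simp
    rw [E, whisker_exchange_assoc]
    simp only [tensor_whiskerLeft, Category.assoc, Iso.inv_hom_id_assoc, e]
    rw [← hR]; simp
  have hFR : F X ≫ X ◁ R = X ◁ R ≫ F X := by
    rw [F, whisker_exchange_assoc]
    simp only [Category.assoc, ← MonoidalCategory.whiskerLeft_comp, hR]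
    simp
  have h2 : τ ≫ τ = (β_ X X).hom ≫ (t ⊗ₘ (t ≫ t ≫ R)) ≫ F X ≫ R ▷ X := by
    calc τ ≫ τ = G X ≫ (t ≫ R) ▷ X ≫ (β_ X X).hom ≫ t ▷ X ≫ E X ≫ X ◁ R := by
            have e : τ ≫ τ = (G X ≫ (t ≫ R) ▷ X ≫ (β_ X X).hom) ≫ (t ▷ X ≫ E X ≫ X ◁ R) := by
              rw [← h1, ← hτ]
            rw [e]; simp only [Category.assoc]
      _ = G X ≫ (t ⊗ₘ t) ≫ (β_ X X).hom ≫ (X ◁ R ≫ E X) ≫ X ◁ R := by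
            rw [braiding_naturality_assoc]
            rw [braiding_naturality_left_assoc]
            simp only [← id_tensorHom, ← tensorHom_id, tensorHom_comp_tensorHom, tensorHom_comp_tensorHom_assoc, Category.comp_id, Category.id_comp, Category.assoc]
      _ = (G X ≫ (t ⊗ₘ t) ≫ (β_ X X).hom ≫ E X) ≫ R ▷ X ≫ X ◁ R := by
            rw [hER]; simp only [Category.assoc]
      _ = (β_ X X).hom ≫ (t ⊗ₘ (t ≫ t)) ≫ (F X ≫ X ◁ R) ≫ R ▷ X := by
            rw [core t h h', ← whisker_exchange]; simp only [Category.assoc]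
      _ = _ := by
            rw [hFR]
            simp only [← id_tensorHom, ← tensorHom_id, tensorHom_comp_tensorHom, tensorHom_comp_tensorHom_assoc, Category.comp_id, Category.id_comp, Category.assoc]
  rw [h2, h1]
  calc _ = G X ≫ (β_ X X).hom ≫ (β_ X X).hom ≫ ((t ≫ R ≫ t) ⊗ₘ (t ≫ t ≫ R)) ≫ F X ≫ R ▷ X := by
        simp only [Category.assoc]
        rw [braiding_naturality_left_assoc, braiding_naturality_right_assoc]
        simp only [← id_tensorHom, ← tensorHom_id, tensorHom_comp_tensorHom, tensorHom_comp_tensorHom_assoc, Category.comp_id, Category.id_comp, Category.assoc]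
    _ = _ := by
        rw [hcomb, F_dbl hm hc, reassoc_of% (GF X)]

section delta
variable (δ : X ⟶ 𝟙_ C)

def T : X ⟶ X := Δ[X] ≫ δ ▷ X ≫ (λ_ X).hom
def T' : X ⟶ X := Δ[X] ≫ X ◁ δ ≫ (ρ_ X).hom

theorem T_comul : T δ ≫ Δ[X] = Δ[X] ≫ T δ ▷ X := by
  calc _ = Δ[X] ≫ (δ ▷ X ≫ 𝟙_ C ◁ Δ[X]) ⊗≫ 𝟙 _ := by
        simp only [T]; monoidal
    _ = (Δ[X] ≫ X ◁ Δ[X]) ⊗≫ δ ▷ (X ⊗ X) ⊗≫ 𝟙 _ := by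
        rw [← whisker_exchange]; monoidal
    _ = _ := by
        rw [comul_assoc]; simp only [T]; monoidal

theorem T'_comul : T' δ ≫ Δ[X] = Δ[X] ≫ X ◁ T' δ := by
  calc _ = Δ[X] ≫ (X ◁ δ ≫ Δ[X] ▷ 𝟙_ C) ⊗≫ 𝟙 _ := by
        simp only [T']; monoidal
    _ = (Δ[X] ≫ Δ[X] ▷ X ≫ (α_ X X X).hom) ⊗≫ (X ⊗ X) ◁ δ ⊗≫ 𝟙 _ := by
        rw [whisker_exchange]; monoidal
    _ = _ := by
        rw [← comul_assoc]; simp only [T']; monoidal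

theorem comul_T : Δ[X] ≫ X ◁ T δ = Δ[X] ≫ T' δ ▷ X := by
  calc _ = (Δ[X] ≫ X ◁ Δ[X]) ⊗≫ X ◁ δ ▷ X ⊗≫ 𝟙 _ := by
        simp only [T]; monoidal
    _ = _ := by
        rw [comul_assoc]; simp only [T']; monoidal

theorem T_T' : T δ ≫ T' δ = T' δ ≫ T δ := by
  calc _ = (T δ ≫ Δ[X]) ≫ X ◁ δ ≫ (ρ_ X).hom := by simp only [T', Category.assoc]
    _ = Δ[X] ≫ T δ ▷ X ≫ X ◁ δ ≫ (ρ_ X).hom := by rw [T_comul]; simp only [Category.assoc]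
    _ = _ := by rw [← whisker_exchange_assoc, rightUnitor_naturality]; simp only [T', Category.assoc]

theorem mul_T (hδm : μ[X] ≫ δ = (δ ⊗ₘ δ) ≫ (λ_ (𝟙_ C)).hom) : μ[X] ≫ T δ = (T δ ⊗ₘ T δ) ≫ μ[X] := by
  calc _ = (Δ[X] ⊗ₘ Δ[X]) ≫ tensorμ X X X X ≫ ((μ[X] ≫ δ) ⊗ₘ μ[X]) ≫ (λ_ X).hom := by
        rw [T, BimonObj.mul_comul_assoc]
        simp only [← id_tensorHom, ← tensorHom_id, tensorHom_comp_tensorHom, tensorHom_comp_tensorHom_assoc, Category.comp_id, Category.id_comp, Category.assoc]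
    _ = (Δ[X] ⊗ₘ Δ[X]) ≫ (tensorμ X X X X ≫ ((δ ⊗ₘ δ) ⊗ₘ (𝟙 X ⊗ₘ 𝟙 X))) ≫ ((λ_ (𝟙_ C)).hom ⊗ₘ μ[X]) ≫ (λ_ X).hom := by
        rw [hδm]
        simp only [id_tensorHom_id]
        simp only [← id_tensorHom, ← tensorHom_id, tensorHom_comp_tensorHom, tensorHom_comp_tensorHom_assoc, Category.comp_id, Category.id_comp, Category.assoc]
    _ = (Δ[X] ⊗ₘ Δ[X]) ≫ ((δ ⊗ₘ 𝟙 X) ⊗ₘ (δ ⊗ₘ 𝟙 X)) ≫ tensorμ (𝟙_ C) X (𝟙_ C) X ≫ ((λ_ (𝟙_ C)).hom ⊗ₘ μ[X]) ≫ (λ_ X).hom := by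
        rw [← tensorμ_natural]; simp only [Category.assoc]
    _ = (Δ[X] ⊗ₘ Δ[X]) ≫ ((δ ⊗ₘ 𝟙 X) ⊗ₘ (δ ⊗ₘ 𝟙 X)) ≫ ((λ_ X).hom ⊗ₘ (λ_ X).hom) ≫ μ[X] := by
        have e : tensorμ (𝟙_ C) X (𝟙_ C) X ≫ ((λ_ (𝟙_ C)).hom ⊗ₘ μ[X]) ≫ (λ_ X).hom = ((λ_ X).hom ⊗ₘ (λ_ X).hom) ≫ μ[X] := by
          simp only [tensorμ, braiding_tensorUnit_right, MonoidalCategory.tensorHom_def]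
          monoidal
        rw [e]
    _ = _ := by
        simp only [T]
        simp only [← id_tensorHom, ← tensorHom_id, tensorHom_comp_tensorHom, tensorHom_comp_tensorHom_assoc, Category.comp_id, Category.id_comp, Category.assoc]

theorem T'_S_T (hδm : μ[X] ≫ δ = (δ ⊗ₘ δ) ≫ (λ_ (𝟙_ C)).hom)
    (hδ1 : η[X] ≫ δ = 𝟙 _) : T' δ ≫ 𝒮[X] ≫ T δ = 𝒮[X] := by
  have e1 : 𝒮[X] ≫ T δ = Δ[X] ≫ X ◁ (𝒮[X] ≫ δ) ≫ (ρ_ X).hom ≫ 𝒮[X] := by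
    calc _ = Δ[X] ≫ (β_ X X).hom ≫ (𝒮[X] ⊗ₘ 𝒮[X]) ≫ δ ▷ X ≫ (λ_ X).hom := by
          rw [T, reassoc_of% (antipode_comul X)]
      _ = Δ[X] ≫ (β_ X X).hom ≫ ((𝒮[X] ≫ δ) ⊗ₘ 𝒮[X]) ≫ (λ_ X).hom := by
          simp only [← id_tensorHom, ← tensorHom_id, tensorHom_comp_tensorHom, tensorHom_comp_tensorHom_assoc, Category.comp_id, Category.id_comp, Category.assoc]
      _ = Δ[X] ≫ (𝒮[X] ⊗ₘ (𝒮[X] ≫ δ)) ≫ (ρ_ X).hom := by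
          rw [← braiding_naturality_assoc, braiding_leftUnitor]
      _ = _ := by
          rw [MonoidalCategory.tensorHom_def', Category.assoc, rightUnitor_naturality]
  have e2 : T' δ ≫ 𝒮[X] ≫ δ = ε[X] := by
    calc _ = Δ[X] ≫ (X ◁ δ ≫ (𝒮[X] ≫ δ) ▷ 𝟙_ C) ≫ (ρ_ _).hom := by
          simp only [T', Category.assoc, rightUnitor_naturality]
      _ = Δ[X] ≫ 𝒮[X] ▷ X ≫ (δ ⊗ₘ δ) ≫ (λ_ (𝟙_ C)).hom := by
          rw [unitors_equal]
          simp only [← id_tensorHom, ← tensorHom_id, tensorHom_comp_tensorHom, tensorHom_comp_tensorHom_assoc, Category.comp_id, Category.id_comp, Category.assoc]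
      _ = ε[X] := by
          rw [← hδm, antipode_left_assoc, hδ1, Category.comp_id]
  rw [e1, reassoc_of% (T'_comul δ), ← MonoidalCategory.whiskerLeft_comp_assoc, e2, comul_counit_assoc]
  simp
end delta

def rm (g : 𝟙_ C ⟶ X) : X ⟶ X := (ρ_ X).inv ≫ X ◁ g ≫ μ[X]
def lm (g : 𝟙_ C ⟶ X) : X ⟶ X := (λ_ X).inv ≫ g ▷ X ≫ μ[X]

theorem mul_rm (g : 𝟙_ C ⟶ X) : μ[X] ≫ rm g = X ◁ rm g ≫ μ[X] := by
  calc _ = 𝟙 _ ⊗≫ (μ[X] ▷ 𝟙_ C ≫ X ◁ g) ≫ μ[X] := by simp only [rm]; monoidal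
    _ = 𝟙 _ ⊗≫ X ◁ (X ◁ g) ⊗≫ μ[X] ▷ X ≫ μ[X] := by rw [← whisker_exchange]; monoidal
    _ = _ := by rw [MonObj.mul_assoc]; simp only [rm]; monoidal

theorem mul_lm (g : 𝟙_ C ⟶ X) : μ[X] ≫ lm g = lm g ▷ X ≫ μ[X] := by
  calc _ = 𝟙 _ ⊗≫ (𝟙_ C ◁ μ[X] ≫ g ▷ X) ≫ μ[X] := by simp only [lm]; monoidal
    _ = 𝟙 _ ⊗≫ g ▷ X ▷ X ⊗≫ ((α_ X X X).hom ≫ X ◁ μ[X] ≫ μ[X]) := by rw [whisker_exchange]; monoidal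
    _ = _ := by rw [← MonObj.mul_assoc]; simp only [lm]; monoidal

theorem rm_lm_mul (g : 𝟙_ C ⟶ X) : rm g ▷ X ≫ μ[X] = X ◁ lm g ≫ μ[X] := by
  calc _ = 𝟙 _ ⊗≫ (X ◁ g) ▷ X ⊗≫ μ[X] ▷ X ≫ μ[X] := by simp only [rm]; monoidal
    _ = _ := by rw [MonObj.mul_assoc]; simp only [lm]; monoidal

theorem rm_rm (g k : 𝟙_ C ⟶ X) : rm g ≫ rm k = rm ((λ_ _).inv ≫ (g ⊗ₘ k) ≫ μ[X]) := by
  calc _ = (ρ_ X).inv ≫ X ◁ g ≫ (μ[X] ≫ rm k) := by simp only [rm, Category.assoc]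
    _ = (ρ_ X).inv ≫ X ◁ (g ≫ rm k) ≫ μ[X] := by rw [mul_rm]; simp
    _ = (ρ_ X).inv ≫ X ◁ ((ρ_ _).inv ≫ (g ▷ 𝟙_ C ≫ X ◁ k) ≫ μ[X]) ≫ μ[X] := by
        simp only [rm, Category.assoc, rightUnitor_inv_naturality_assoc]
    _ = _ := by rw [← MonoidalCategory.tensorHom_def, ← unitors_inv_equal]; rfl

theorem lm_lm (g k : 𝟙_ C ⟶ X) : lm k ≫ lm g = lm ((λ_ _).inv ≫ (g ⊗ₘ k) ≫ μ[X]) := by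
  calc _ = (λ_ X).inv ≫ k ▷ X ≫ (μ[X] ≫ lm g) := by simp only [lm, Category.assoc]
    _ = (λ_ X).inv ≫ (k ≫ lm g) ▷ X ≫ μ[X] := by rw [mul_lm]; simp
    _ = (λ_ X).inv ≫ ((λ_ _).inv ≫ (𝟙_ C ◁ k ≫ g ▷ X) ≫ μ[X]) ▷ X ≫ μ[X] := by
        simp only [lm, Category.assoc, leftUnitor_inv_naturality_assoc]
    _ = _ := by rw [← MonoidalCategory.tensorHom_def']; rfl

theorem rm_one : rm η[X] = 𝟙 X := by simp [rm]
theorem lm_one : lm η[X] = 𝟙 X := by simp [lm]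

theorem rm_lm (g k : 𝟙_ C ⟶ X) : rm g ≫ lm k = lm k ≫ rm g := by
  calc _ = (ρ_ X).inv ≫ X ◁ g ≫ (μ[X] ≫ lm k) := by simp only [rm, Category.assoc]
    _ = (ρ_ X).inv ≫ (lm k ▷ 𝟙_ C ≫ X ◁ g) ≫ μ[X] := by rw [mul_lm, ← whisker_exchange]; simp
    _ = _ := by simp only [Category.assoc, rightUnitor_inv_naturality_assoc, rm]

theorem rm_comul (g : 𝟙_ C ⟶ X) (hg : g ≫ Δ[X] = (λ_ _).inv ≫ (g ⊗ₘ g)) :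
    rm g ≫ Δ[X] = Δ[X] ≫ (rm g ⊗ₘ rm g) := by
  calc _ = (ρ_ X).inv ≫ (Δ[X] ⊗ₘ (g ≫ Δ[X])) ≫ tensorμ X X X X ≫ (μ[X] ⊗ₘ μ[X]) := by
        simp only [rm, Category.assoc, BimonObj.mul_comul]
        simp only [← id_tensorHom, ← tensorHom_id, tensorHom_comp_tensorHom, tensorHom_comp_tensorHom_assoc, Category.comp_id, Category.id_comp, Category.assoc]
    _ = (ρ_ X).inv ≫ (Δ[X] ⊗ₘ (λ_ _).inv) ≫ (((𝟙 X ⊗ₘ 𝟙 X) ⊗ₘ (g ⊗ₘ g)) ≫ tensorμ X X X X) ≫ (μ[X] ⊗ₘ μ[X]) := by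
        rw [hg]
        simp only [id_tensorHom_id]
        simp only [← id_tensorHom, ← tensorHom_id, tensorHom_comp_tensorHom, tensorHom_comp_tensorHom_assoc, Category.comp_id, Category.id_comp, Category.assoc]
    _ = (ρ_ X).inv ≫ Δ[X] ▷ 𝟙_ C ≫ ((X ⊗ X) ◁ (λ_ _).inv ≫ tensorμ X X (𝟙_ C) (𝟙_ C)) ≫ ((X ◁ g ⊗ₘ X ◁ g) ≫ (μ[X] ⊗ₘ μ[X])) := by
        rw [tensorμ_natural]
        simp only [← id_tensorHom, ← tensorHom_id, tensorHom_comp_tensorHom, tensorHom_comp_tensorHom_assoc, Category.comp_id, Category.id_comp, Category.assoc]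
    _ = (ρ_ X).inv ≫ Δ[X] ▷ 𝟙_ C ≫ ((ρ_ _).hom ≫ ((ρ_ X).inv ⊗ₘ (ρ_ X).inv)) ≫ ((X ◁ g ⊗ₘ X ◁ g) ≫ (μ[X] ⊗ₘ μ[X])) := by
        have e : (X ⊗ X) ◁ (λ_ _).inv ≫ tensorμ X X (𝟙_ C) (𝟙_ C) = ((ρ_ _).hom ≫ ((ρ_ X).inv ⊗ₘ (ρ_ X).inv)) := by
          simp only [tensorμ, braiding_tensorUnit_right]
          monoidal
        rw [e]
    _ = _ := by
        simp only [rm, rightUnitor_naturality_assoc, Category.assoc, Iso.inv_hom_id_assoc]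
        simp only [← id_tensorHom, ← tensorHom_id, tensorHom_comp_tensorHom, tensorHom_comp_tensorHom_assoc, Category.comp_id, Category.id_comp, Category.assoc]

theorem lm_comul (g : 𝟙_ C ⟶ X) (hg : g ≫ Δ[X] = (λ_ _).inv ≫ (g ⊗ₘ g)) :
    lm g ≫ Δ[X] = Δ[X] ≫ (lm g ⊗ₘ lm g) := by
  calc _ = (λ_ X).inv ≫ ((g ≫ Δ[X]) ⊗ₘ Δ[X]) ≫ tensorμ X X X X ≫ (μ[X] ⊗ₘ μ[X]) := by
        simp only [lm, Category.assoc, BimonObj.mul_comul]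
        simp only [← id_tensorHom, ← tensorHom_id, tensorHom_comp_tensorHom, tensorHom_comp_tensorHom_assoc, Category.comp_id, Category.id_comp, Category.assoc]
    _ = (λ_ X).inv ≫ ((λ_ _).inv ⊗ₘ Δ[X]) ≫ (((g ⊗ₘ g) ⊗ₘ (𝟙 X ⊗ₘ 𝟙 X)) ≫ tensorμ X X X X) ≫ (μ[X] ⊗ₘ μ[X]) := by
        rw [hg]
        simp only [id_tensorHom_id]
        simp only [← id_tensorHom, ← tensorHom_id, tensorHom_comp_tensorHom, tensorHom_comp_tensorHom_assoc, Category.comp_id, Category.id_comp, Category.assoc]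
    _ = (λ_ X).inv ≫ 𝟙_ C ◁ Δ[X] ≫ ((λ_ _).inv ▷ (X ⊗ X) ≫ tensorμ (𝟙_ C) (𝟙_ C) X X) ≫ ((g ▷ X ⊗ₘ g ▷ X) ≫ (μ[X] ⊗ₘ μ[X])) := by
        rw [tensorμ_natural]
        simp only [← id_tensorHom, ← tensorHom_id, tensorHom_comp_tensorHom, tensorHom_comp_tensorHom_assoc, Category.comp_id, Category.id_comp, Category.assoc]
    _ = (λ_ X).inv ≫ 𝟙_ C ◁ Δ[X] ≫ ((λ_ _).hom ≫ ((λ_ X).inv ⊗ₘ (λ_ X).inv)) ≫ ((g ▷ X ⊗ₘ g ▷ X) ≫ (μ[X] ⊗ₘ μ[X])) := by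
        have e : (λ_ _).inv ▷ (X ⊗ X) ≫ tensorμ (𝟙_ C) (𝟙_ C) X X = ((λ_ _).hom ≫ ((λ_ X).inv ⊗ₘ (λ_ X).inv)) := by
          simp only [tensorμ, braiding_tensorUnit_left]
          monoidal
        rw [e]
    _ = _ := by
        simp only [lm, leftUnitor_naturality_assoc, Category.assoc, Iso.inv_hom_id_assoc]
        simp only [← id_tensorHom, ← tensorHom_id, tensorHom_comp_tensorHom, tensorHom_comp_tensorHom_assoc, Category.comp_id, Category.id_comp, Category.assoc]

theorem main_bh (δ : X ⟶ 𝟙_ C) (σ : 𝟙_ C ⟶ X)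
    (hδm : μ[X] ≫ δ = (δ ⊗ₘ δ) ≫ (λ_ (𝟙_ C)).hom) (hδ1 : η[X] ≫ δ = 𝟙 _)
    (hσ : σ ≫ Δ[X] = (λ_ _).inv ≫ (σ ⊗ₘ σ)) (hσε : σ ≫ ε[X] = 𝟙 _) (hσδ : σ ≫ δ = 𝟙 _)
    (t : X ⟶ X) (ht : t = T δ ≫ 𝒮[X])
    (hb : t ≫ t ≫ lm (σ ≫ 𝒮[X]) ≫ rm σ = 𝟙 X)
    (τ : X ⊗ X ⟶ X ⊗ X) (hτ : τ = t ▷ X ≫ E X ≫ X ◁ rm σ) :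
    τ ≫ τ ≫ τ = (β_ X X).hom ≫ (β_ X X).hom := by
  obtain ⟨s, hs⟩ : ∃ s, s = σ ≫ 𝒮[X] := ⟨_, rfl⟩
  rw [← hs] at hb
  have h : t ≫ Δ = Δ ≫ (β_ X X).hom ≫ (𝒮 ⊗ₘ t) := by
    rw [ht, Category.assoc, antipode_comul, reassoc_of% (T_comul δ), braiding_naturality_left_assoc]
    simp only [← id_tensorHom, ← tensorHom_id, tensorHom_comp_tensorHom, tensorHom_comp_tensorHom_assoc, Category.comp_id, Category.id_comp, Category.assoc]
  have h' : μ ≫ t = (t ⊗ₘ t) ≫ (β_ X X).hom ≫ μ := by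
    rw [ht, reassoc_of% (mul_T δ hδm), CategoryTheory.HopfObj.mul_antipode]
    simp only [← id_tensorHom, ← tensorHom_id, tensorHom_comp_tensorHom, tensorHom_comp_tensorHom_assoc, Category.comp_id, Category.id_comp, Category.assoc]
  have b11 : (β_ (𝟙_ C) (𝟙_ C)).hom = 𝟙 _ := by
    rw [braiding_tensorUnit_left, unitors_equal]; simp
  have hsΔ : s ≫ Δ[X] = (λ_ _).inv ≫ (s ⊗ₘ s) := by
    rw [hs, Category.assoc, antipode_comul, reassoc_of% hσ, braiding_naturality_assoc, b11]
    simp only [← id_tensorHom, ← tensorHom_id, tensorHom_comp_tensorHom, tensorHom_comp_tensorHom_assoc, Category.comp_id, Category.id_comp, Category.assoc]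
  have hσs : (λ_ _).inv ≫ (σ ⊗ₘ s) ≫ μ[X] = η[X] := by
    have := congrArg (σ ≫ ·) (antipode_right X)
    simp only [reassoc_of% hσ, reassoc_of% hσε] at this
    rw [← this, hs]
    simp only [← id_tensorHom, ← tensorHom_id, tensorHom_comp_tensorHom, tensorHom_comp_tensorHom_assoc, Category.comp_id, Category.id_comp, Category.assoc]
  have hsσ : (λ_ _).inv ≫ (s ⊗ₘ σ) ≫ μ[X] = η[X] := by
    have := congrArg (σ ≫ ·) (antipode_left X)
    simp only [reassoc_of% hσ, reassoc_of% hσε] at this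
    rw [← this, hs]
    simp only [← id_tensorHom, ← tensorHom_id, tensorHom_comp_tensorHom, tensorHom_comp_tensorHom_assoc, Category.comp_id, Category.id_comp, Category.assoc]
  have RR' : rm σ ≫ rm s = 𝟙 X := by rw [rm_rm, hσs, rm_one]
  have R'R : rm s ≫ rm σ = 𝟙 X := by rw [rm_rm, hsσ, rm_one]
  have L'L : lm s ≫ lm σ = 𝟙 X := by rw [lm_lm, hσs, lm_one]
  have LL' : lm σ ≫ lm s = 𝟙 X := by rw [lm_lm, hsσ, lm_one]
  have hσT : σ ≫ T δ = σ := by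
    rw [T, reassoc_of% hσ, MonoidalCategory.tensorHom_def', Category.assoc,
      ← comp_whiskerRight_assoc, hσδ]
    simp
  have hσt : σ ≫ t = s := by rw [ht, reassoc_of% hσT, hs]
  have hRt : rm σ ≫ t = t ≫ lm s := by
    simp only [rm, lm, Category.assoc, h']
    rw [← hσt]
    calc _ = (ρ_ X).inv ≫ (t ⊗ₘ (σ ≫ t)) ≫ (β_ X X).hom ≫ μ[X] := by simp only [← id_tensorHom, ← tensorHom_id, tensorHom_comp_tensorHom, tensorHom_comp_tensorHom_assoc, Category.comp_id, Category.id_comp, Category.assoc]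
      _ = (ρ_ X).inv ≫ (β_ X (𝟙_ C)).hom ≫ ((σ ≫ t) ⊗ₘ t) ≫ μ[X] := by
        rw [braiding_naturality_assoc]
      _ = (λ_ X).inv ≫ (𝟙_ C ◁ t ≫ (σ ≫ t) ▷ X) ≫ μ[X] := by
        rw [braiding_tensorUnit_right, MonoidalCategory.tensorHom_def']; simp
      _ = _ := by simp
  have ttL' : t ≫ t ≫ lm s = rm s := by
    have := congrArg (· ≫ rm s) hb
    simpa [RR'] using this
  have ttR : t ≫ t ≫ rm σ = lm σ := by
    have := congrArg (· ≫ lm σ) hb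
    rw [← rm_lm] at this
    simpa [L'L] using this
  have hR'L : (rm s ⊗ₘ lm σ) ≫ μ[X] = μ[X] := by
    rw [MonoidalCategory.tensorHom_def', Category.assoc, rm_lm_mul,
      ← MonoidalCategory.whiskerLeft_comp_assoc, LL']
    simp
  have hRL' : (rm σ ⊗ₘ lm s) ≫ μ[X] = μ[X] := by
    rw [MonoidalCategory.tensorHom_def', Category.assoc, rm_lm_mul,
      ← MonoidalCategory.whiskerLeft_comp_assoc, L'L]
    simp
  have hcomb : ((t ≫ rm σ ≫ t) ⊗ₘ (t ≫ t ≫ rm σ)) ≫ F X ≫ rm σ ▷ X = F X := by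
    rw [hRt, ttL', ttR, F]
    calc _ = (rm s ≫ Δ[X]) ▷ X ≫ (X ⊗ X) ◁ lm σ ≫ (α_ X X X).hom ≫ (X ◁ μ[X] ≫ rm σ ▷ X) := by
          rw [MonoidalCategory.tensorHom_def]
          simp only [Category.assoc, comp_whiskerRight]
          rw [whisker_exchange_assoc]
      _ = Δ[X] ▷ X ≫ ((rm s ⊗ₘ rm s) ▷ X ≫ (X ⊗ X) ◁ lm σ) ≫ (α_ X X X).hom ≫
            rm σ ▷ (X ⊗ X) ≫ X ◁ μ[X] := by
          rw [rm_comul s hsΔ, whisker_exchange]; simp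
      _ = Δ[X] ▷ X ≫ (α_ X X X).hom ≫ ((rm s ≫ rm σ) ⊗ₘ ((rm s ⊗ₘ lm σ) ≫ μ[X])) := by
          rw [← MonoidalCategory.tensorHom_def, associator_naturality_assoc]
          simp only [← id_tensorHom, ← tensorHom_id, tensorHom_comp_tensorHom, tensorHom_comp_tensorHom_assoc, Category.comp_id, Category.id_comp, Category.assoc]
      _ = _ := by rw [R'R, hR'L, id_tensorHom]
  obtain ⟨P, hP⟩ : ∃ P, P = lm s ≫ rm σ := ⟨_, rfl⟩
  rw [← hP] at hb
  have Pm : μ[X] ≫ P = (P ⊗ₘ P) ≫ μ[X] := by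
    calc _ = (lm s ⊗ₘ rm σ) ≫ μ[X] := by
          rw [hP, reassoc_of% (mul_lm s), mul_rm, MonoidalCategory.tensorHom_def, Category.assoc]
      _ = (lm s ⊗ₘ rm σ) ≫ (rm σ ⊗ₘ lm s) ≫ μ[X] := by rw [hRL']
      _ = _ := by
          rw [hP, tensorHom_comp_tensorHom_assoc, rm_lm]
  have Pc : P ≫ Δ[X] = Δ[X] ≫ (P ⊗ₘ P) := by
    rw [hP, Category.assoc, rm_comul σ hσ, reassoc_of% (lm_comul s hsΔ)]
    simp only [← id_tensorHom, ← tensorHom_id, tensorHom_comp_tensorHom, tensorHom_comp_tensorHom_assoc, Category.comp_id, Category.id_comp, Category.assoc]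
  have dn : ∀ A B : X ⟶ X, (A ⊗ₘ B) ≫ (β_ X X).hom ≫ (β_ X X).hom
      = (β_ X X).hom ≫ (β_ X X).hom ≫ (A ⊗ₘ B) := by
    intro A B
    rw [braiding_naturality_assoc, braiding_naturality]
  have hm : (β_ X X).hom ≫ (β_ X X).hom ≫ μ[X] = μ[X] := by
    symm
    calc μ[X] = (μ[X] ≫ t) ≫ t ≫ P := by rw [Category.assoc, hb, Category.comp_id]
      _ = (t ⊗ₘ t) ≫ (β_ X X).hom ≫ (μ[X] ≫ t) ≫ P := by
          simp only [Category.assoc, reassoc_of% h']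
      _ = (t ⊗ₘ t) ≫ (β_ X X).hom ≫ (t ⊗ₘ t) ≫ (β_ X X).hom ≫ (P ⊗ₘ P) ≫ μ[X] := by
          rw [h']; simp only [Category.assoc, Pm]
      _ = (β_ X X).hom ≫ (β_ X X).hom ≫ ((t ≫ t ≫ P) ⊗ₘ (t ≫ t ≫ P)) ≫ μ[X] := by
          rw [braiding_naturality_assoc, braiding_naturality_assoc, braiding_naturality_assoc]
          simp only [← id_tensorHom, ← tensorHom_id, tensorHom_comp_tensorHom, tensorHom_comp_tensorHom_assoc, Category.comp_id, Category.id_comp, Category.assoc]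
      _ = _ := by rw [hb]; simp
  have hc : Δ[X] ≫ (β_ X X).hom ≫ (β_ X X).hom = Δ[X] := by
    have tS : t ≫ 𝒮[X] = T' δ ≫ t ≫ t := by
      have e := T'_S_T δ hδm hδ1
      rw [ht]
      simp only [Category.assoc]
      rw [← reassoc_of% (T_T' δ), reassoc_of% e]
    have key : Δ[X] ≫ ((t ≫ 𝒮[X] ≫ P) ⊗ₘ (𝒮[X] ≫ t ≫ P)) = Δ[X] := by
      calc _ = Δ[X] ≫ T' δ ▷ X ≫ ((t ≫ t ≫ P) ⊗ₘ (𝒮[X] ≫ t ≫ P)) := by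
            rw [reassoc_of% tS]
            simp only [← id_tensorHom, ← tensorHom_id, tensorHom_comp_tensorHom, tensorHom_comp_tensorHom_assoc, Category.comp_id, Category.id_comp, Category.assoc]
        _ = Δ[X] ≫ ((t ≫ t ≫ P) ⊗ₘ ((T δ ≫ 𝒮[X]) ≫ t ≫ P)) := by
            rw [← reassoc_of% (comul_T δ)]
            simp only [← id_tensorHom, ← tensorHom_id, tensorHom_comp_tensorHom, tensorHom_comp_tensorHom_assoc, Category.comp_id, Category.id_comp, Category.assoc]
        _ = _ := by rw [← ht, hb]; simp
    symm
    calc Δ[X] = t ≫ t ≫ P ≫ Δ[X] := by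
          have := congrArg (· ≫ Δ[X]) hb
          simpa using this.symm
      _ = Δ[X] ≫ (β_ X X).hom ≫ (𝒮[X] ⊗ₘ t) ≫ (β_ X X).hom ≫ (𝒮[X] ⊗ₘ t) ≫ (P ⊗ₘ P) := by
          rw [Pc, reassoc_of% h, reassoc_of% h]
      _ = (Δ[X] ≫ ((t ≫ 𝒮[X] ≫ P) ⊗ₘ (𝒮[X] ≫ t ≫ P))) ≫ (β_ X X).hom ≫ (β_ X X).hom := by
          rw [Category.assoc, dn, braiding_naturality_assoc]
          simp only [← id_tensorHom, ← tensorHom_id, tensorHom_comp_tensorHom, tensorHom_comp_tensorHom_assoc, Category.comp_id, Category.id_comp, Category.assoc]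
      _ = _ := by rw [key]
  exact main_abs t (rm σ) h h' (mul_rm σ) hcomb hm hc τ hτ

end
end BH

/-- The Mathlib Hopf object attached to `A`. -/
@[reducible] def BH.inst (A : _root_.HopfObj C) : CategoryTheory.HopfObj A.X :=
  letI m : MonObj A.X :=
    { one := A.one, mul := A.mul, one_mul := A.one_mul, mul_one := A.mul_one,
      mul_assoc := A.mul_assoc }
  letI c : ComonObj A.X :=
    { counit := A.counit, comul := A.comul, counit_comul := A.counit_comul,
      comul_counit := A.comul_counit, comul_assoc := A.comul_assoc.symm }
  letI b : BimonObj A.X :=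
    { mul_comul := by
        simp only [MonObj.tensorObj.mul_def, tensorμ, Category.assoc]
        exact A.mul_comul
      one_comul := by
        exact A.one_comul
      mul_counit := by
        exact A.mul_counit
      one_counit := A.one_counit }
  { antipode := A.antipode, antipode_left := A.antipode_left,
    antipode_right := A.antipode_right }

theorem BH.twist_eq (A : _root_.HopfObj C) (δ : A.X ⟶ 𝟙_ C) :
    letI := BH.inst A
    A.twist δ = BH.T δ ≫ A.antipode := by
  show A.comul ≫ (δ ⊗ₘ A.antipode) ≫ (λ_ A.X).hom =
    (A.comul ≫ δ ▷ A.X ≫ (λ_ A.X).hom) ≫ A.antipode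
  rw [MonoidalCategory.tensorHom_def]; simp

theorem BH.bmpi_eq (A : _root_.HopfObj C) (δ : A.X ⟶ 𝟙_ C) (σ : 𝟙_ C ⟶ A.X) :
    letI := BH.inst A
    A.bmpiMap δ σ = A.twist δ ≫ A.twist δ ≫ BH.lm (σ ≫ A.antipode) ≫ BH.rm σ := by
  show (λ_ A.X).inv ≫ ((σ ≫ A.antipode) ⊗ₘ (A.twist δ ≫ A.twist δ)) ≫
    (ρ_ (A.X ⊗ A.X)).inv ≫ ((A.X ⊗ A.X) ◁ σ) ≫ (A.mul ▷ A.X) ≫ A.mul =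
    A.twist δ ≫ A.twist δ ≫ ((λ_ A.X).inv ≫ (σ ≫ A.antipode) ▷ A.X ≫ A.mul) ≫
      (ρ_ A.X).inv ≫ A.X ◁ σ ≫ A.mul
  rw [MonoidalCategory.tensorHom_def', whisker_exchange_assoc]
  simp

theorem BH.tau_eq (A : _root_.HopfObj C) (δ : A.X ⟶ 𝟙_ C) (σ : 𝟙_ C ⟶ A.X) :
    letI := BH.inst A
    A.tau2 δ σ = A.twist δ ▷ A.X ≫ BH.E A.X ≫ A.X ◁ BH.rm σ := by
  show (ρ_ (A.X ⊗ A.X)).inv ≫ (((A.twist δ ≫ A.comul) ⊗ₘ 𝟙 A.X) ⊗ₘ σ) ≫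
    (((α_ A.X A.X A.X).hom ≫ (A.X ◁ (β_ A.X A.X).hom) ≫ (α_ A.X A.X A.X).inv) ▷ A.X) ≫
    (α_ (A.X ⊗ A.X) A.X A.X).hom ≫ (A.mul ⊗ₘ A.mul) =
    A.twist δ ▷ A.X ≫ (A.comul ▷ A.X ≫ (α_ A.X A.X A.X).hom ≫ A.X ◁ (β_ A.X A.X).hom ≫
      (α_ A.X A.X A.X).inv ≫ A.mul ▷ A.X) ≫ A.X ◁ ((ρ_ A.X).inv ≫ A.X ◁ σ ≫ A.mul)
  obtain ⟨w, hw⟩ : ∃ w, w = (α_ A.X A.X A.X).hom ≫ (A.X ◁ (β_ A.X A.X).hom) ≫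
    (α_ A.X A.X A.X).inv := ⟨_, rfl⟩
  have hw' : ∀ {Z : C} (f : (A.X ⊗ A.X) ⊗ A.X ⟶ Z), (α_ A.X A.X A.X).hom ≫
      (A.X ◁ (β_ A.X A.X).hom) ≫ (α_ A.X A.X A.X).inv ≫ f = w ≫ f := by
    intro Z f; rw [hw]; simp
  simp only [Category.assoc, hw']
  rw [← hw, tensorHom_id, MonoidalCategory.tensorHom_def, MonoidalCategory.tensorHom_def,
    Category.assoc, whisker_exchange_assoc]
  have e : (ρ_ ((A.X ⊗ A.X) ⊗ A.X)).inv ≫ ((A.X ⊗ A.X) ⊗ A.X) ◁ σ ≫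
      (α_ (A.X ⊗ A.X) A.X A.X).hom ≫ A.mul ▷ (A.X ⊗ A.X) =
      A.mul ▷ A.X ≫ A.X ◁ ((ρ_ A.X).inv ≫ A.X ◁ σ) := by
    calc _ = 𝟙 _ ⊗≫ (((A.X ⊗ A.X) ⊗ A.X) ◁ σ ≫ (A.mul ▷ A.X) ▷ A.X) ⊗≫ 𝟙 _ := by monoidal
      _ = _ := by rw [whisker_exchange]; monoidal
  have e' := congrArg (· ≫ A.X ◁ A.mul) e
  simp only [Category.assoc] at e'
  simp only [comp_whiskerRight, Category.assoc, ← rightUnitor_inv_naturality_assoc,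
    whisker_exchange_assoc, e']
  simp

/-- For a braided modular pair in involution `(δ, σ)`,
`τ₂ ∘ τ₂ ∘ τ₂ = ψ_{H,H} ∘ ψ_{H,H}`. -/
theorem HopfObj.tau2_cubed (A : _root_.HopfObj C) (δ : A.X ⟶ 𝟙_ C) (σ : 𝟙_ C ⟶ A.X)
    (hδ : A.IsCharacter δ) (hσ : A.IsCocharacter σ) (hbmpi : A.IsBMPI δ σ) :
    A.tau2 δ σ ≫ A.tau2 δ σ ≫ A.tau2 δ σ = (β_ A.X A.X).hom ≫ (β_ A.X A.X).hom := by
  letI := BH.inst A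
  have hb := hbmpi.2
  rw [BH.bmpi_eq] at hb
  exact BH.main_bh (X := A.X) δ σ hδ.1 hδ.2 hσ.1 hσ.2 hbmpi.1 (A.twist δ) (BH.twist_eq A δ) hb
    (A.tau2 δ σ) (BH.tau_eq A δ σ)
end

section
/- Let H be a Hopf monoid in a braided monoidal category C (not assumed symmetric), and let (δ, σ) be a braided modular pair in involution for H. Then for every n ≥ 1 the (n+1)-fold composite τ_n ∘ ⋯ ∘ τ_n equals the n-fold composite Ψ_n ∘ ⋯ ∘ Ψ_n as endomorphisms of H^{⊗n}. -/
open CategoryTheory MonoidalCategory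

universe v u

variable {C : Type u} [Category.{v} C] [MonoidalCategory C] [BraidedCategory C]

/-- Tensor powers, with `H^{⊗0} = 𝟙`, `H^{⊗1} = H` and `H^{⊗(n+1)} = H^{⊗n} ⊗ H`. -/
def tensorPow (H : C) : ℕ → C
  | 0 => 𝟙_ C
  | 1 => H
  | n + 2 => tensorPow H (n + 1) ⊗ H

/-- The coherence isomorphism `H ⊗ H^{⊗n} ≅ H^{⊗(n+1)}`. -/
def tensorPowCons (H : C) : ∀ n : ℕ, H ⊗ tensorPow H n ≅ tensorPow H (n + 1)
  | 0 => ρ_ H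
  | 1 => Iso.refl (H ⊗ H)
  | n + 2 => (α_ H (tensorPow H (n + 1)) H).symm ≪≫
      whiskerRightIso (tensorPowCons H (n + 1)) H

/-- Iterated multiplication `m_{n+1}` of the braided tensor product algebra structure
on `H^{⊗(n+1)}`:  `m₁ = m` and
`m_{n+1} = (m_n ⊗ m) ∘ (1_{H^{⊗n}} ⊗ ψ_{H,H^{⊗n}} ⊗ 1_H)`. -/
def HopfObj.iterMul (A : _root_.HopfObj C) :
    ∀ n : ℕ, tensorPow A.X (n + 1) ⊗ tensorPow A.X (n + 1) ⟶ tensorPow A.X (n + 1)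
  | 0 => A.mul
  | n + 1 =>
      (α_ (tensorPow A.X (n + 1)) A.X (tensorPow A.X (n + 1) ⊗ A.X)).hom ≫
      (tensorPow A.X (n + 1) ◁ (α_ A.X (tensorPow A.X (n + 1)) A.X).inv) ≫
      (tensorPow A.X (n + 1) ◁ ((β_ A.X (tensorPow A.X (n + 1))).hom ▷ A.X)) ≫
      (tensorPow A.X (n + 1) ◁ (α_ (tensorPow A.X (n + 1)) A.X A.X).hom) ≫
      (α_ (tensorPow A.X (n + 1)) (tensorPow A.X (n + 1)) (A.X ⊗ A.X)).inv ≫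
      (HopfObj.iterMul A n ⊗ₘ A.mul)

/-- Iterated comultiplication `Δ⁰ = 1_H`, `Δⁿ = (1_H ⊗ Δ^{n-1}) ∘ Δ : H ⟶ H^{⊗(n+1)}`
(up to coherence isomorphisms). -/
def HopfObj.iterComul (A : _root_.HopfObj C) : ∀ n : ℕ, A.X ⟶ tensorPow A.X (n + 1)
  | 0 => 𝟙 A.X
  | n + 1 => A.comul ≫ (A.X ◁ HopfObj.iterComul A n) ≫ (tensorPowCons A.X (n + 1)).hom

/-- Appending `σ` as a last tensor factor, via `H^{⊗n} ≅ H^{⊗n} ⊗ 𝟙`. -/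
def tensorPowSnoc (H : C) (σ : 𝟙_ C ⟶ H) : ∀ n : ℕ, tensorPow H n ⟶ tensorPow H (n + 1)
  | 0 => σ
  | n + 1 => (ρ_ (tensorPow H (n + 1))).inv ≫ (tensorPow H (n + 1) ◁ σ)

/-- The cyclic operator `τ_{n+1} = m_{n+1} ∘ ((Δⁿ ∘ S̃) ⊗ 1_{H^{⊗n}} ⊗ σ)` on
`H^{⊗(n+1)}`, where the first tensor factor of `H^{⊗(n+1)} ≅ H ⊗ H^{⊗n}` is mapped by
`Δⁿ ∘ S̃` and `σ` is appended via `H^{⊗n} ≅ H^{⊗n} ⊗ 𝟙`. -/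
def HopfObj.cyclicOp (A : _root_.HopfObj C) (δ : A.X ⟶ 𝟙_ C) (σ : 𝟙_ C ⟶ A.X) (n : ℕ) :
    tensorPow A.X (n + 1) ⟶ tensorPow A.X (n + 1) :=
  (tensorPowCons A.X n).inv ≫
    ((A.twist δ ≫ A.iterComul n) ⊗ₘ tensorPowSnoc A.X σ n) ≫ A.iterMul n

/-- `Ψ_{n+1} : H^{⊗(n+1)} ⟶ H^{⊗(n+1)}`, the braiding `ψ_{H^{⊗n},H}` conjugated by the
coherence isomorphisms `H^{⊗(n+1)} ≅ H^{⊗n} ⊗ H` and `H ⊗ H^{⊗n} ≅ H^{⊗(n+1)}`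
(and `Ψ₁ = 1_H`). -/
def tensorPowBraid (H : C) : ∀ n : ℕ, tensorPow H (n + 1) ⟶ tensorPow H (n + 1)
  | 0 => 𝟙 H
  | n + 1 => (β_ (tensorPow H (n + 1)) H).hom ≫ (tensorPowCons H (n + 1)).hom

/-- The `n`-fold composite of an endomorphism. -/
def endoPow {X : C} (f : X ⟶ X) : ℕ → (X ⟶ X)
  | 0 => 𝟙 X
  | n + 1 => f ≫ endoPow f n

namespace BH

set_option linter.unusedSectionVars false
set_option linter.unusedSimpArgs false

section Braid

variable {M : Type*} [Monoid M]

/-- `s 0 * s 1 * ⋯ * s (k-1)` -/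
def fwd (s : ℕ → M) : ℕ → M
  | 0 => 1
  | k + 1 => fwd s k * s k

/-- `s (k-1) * ⋯ * s 0` -/
def bwd (s : ℕ → M) : ℕ → M
  | 0 => 1
  | k + 1 => s k * bwd s k

structure BraidRel (s : ℕ → M) (N : ℕ) : Prop where
  far : ∀ i j, i + 2 ≤ j → j < N → s i * s j = s j * s i
  yb : ∀ i, i + 1 < N → s i * s (i + 1) * s i = s (i + 1) * s i * s (i + 1)

theorem fwd_comm (s : ℕ → M) (x : M) (k : ℕ) (h : ∀ i < k, s i * x = x * s i) :
    fwd s k * x = x * fwd s k := by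
  induction k with
  | zero => simp [fwd]
  | succ k ih =>
    rw [fwd, mul_assoc, h k (by omega), ← mul_assoc, ih (fun i hi => h i (by omega)), mul_assoc]

theorem slide {s : ℕ → M} {N : ℕ} (hs : BraidRel s N) (k : ℕ) (hk : k ≤ N) (i : ℕ)
    (hi : i + 1 < k) : s (i + 1) * fwd s k = fwd s k * s i := by
  induction k with
  | zero => omega
  | succ k ih =>
    rcases Nat.lt_or_ge (i + 1) k with h | h
    · rw [fwd, ← mul_assoc, ih (by omega) h, mul_assoc, hs.far i k (by omega) (by omega),
        mul_assoc]
    · obtain rfl : k = i + 1 := by omega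
      have h1 : fwd s i * s (i + 1) = s (i + 1) * fwd s i :=
        fwd_comm s _ i (fun j hj => hs.far j (i + 1) (by omega) (by omega))
      have := hs.yb i (by omega)
      simp only [fwd]
      calc s (i + 1) * (fwd s i * s i * s (i + 1))
          = (s (i + 1) * fwd s i) * s i * s (i + 1) := by simp only [mul_assoc]
        _ = fwd s i * (s (i + 1) * s i * s (i + 1)) := by rw [← h1]; simp only [mul_assoc]
        _ = _ := by rw [← this]; simp only [mul_assoc]

theorem slide_pow {s : ℕ → M} {N : ℕ} (hs : BraidRel s N) (k : ℕ) (hk : k ≤ N) (m i : ℕ)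
    (hi : i + m < k) : s (i + m) * fwd s k ^ m = fwd s k ^ m * s i := by
  induction m generalizing i with
  | zero => simp
  | succ m ih =>
    rw [pow_succ, ← mul_assoc, show i + (m + 1) = (i + 1) + m by omega, ih (i + 1) (by omega),
      mul_assoc, slide hs k hk i (by omega), mul_assoc]

theorem fwd_pow_aux {s : ℕ → M} {N : ℕ} (hs : BraidRel s N) (k : ℕ) (hk : k + 1 ≤ N) (m j : ℕ)
    (hj : j + m = k + 1) :
    fwd s (k + 1) ^ m * bwd s j = fwd s k ^ m * bwd s (k + 1) := by
  induction m generalizing j with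
  | zero => obtain rfl : j = k + 1 := by omega
            simp
  | succ m ih =>
    have h1 := slide_pow hs (k + 1) hk m j (by omega)
    obtain hjm : j + m = k := by omega
    rw [hjm] at h1
    calc fwd s (k + 1) ^ (m + 1) * bwd s j
        = fwd s k * (s k * fwd s (k + 1) ^ m) * bwd s j := by
          rw [pow_succ']; conv_lhs => enter [1, 1]; rw [fwd]
          simp only [mul_assoc]
      _ = fwd s k * (fwd s (k + 1) ^ m * bwd s (j + 1)) := by
          rw [h1, bwd]; simp only [mul_assoc]
      _ = _ := by rw [ih (j + 1) (by omega), pow_succ', mul_assoc]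

theorem fwd_pow {s : ℕ → M} {N : ℕ} (hs : BraidRel s N) (k : ℕ) (hk : k + 1 ≤ N) :
    fwd s (k + 1) ^ (k + 1) = fwd s k ^ (k + 1) * bwd s (k + 1) := by
  have := fwd_pow_aux hs k hk (k + 1) 0 (by omega)
  simpa [bwd] using this

theorem BraidRel.op {s : ℕ → M} {N : ℕ} (hs : BraidRel s N) :
    BraidRel (fun i => MulOpposite.op (s i)) N where
  far i j h1 h2 := by
    rw [← MulOpposite.op_mul, ← MulOpposite.op_mul, hs.far i j h1 h2]
  yb i h := by
    simp only [← MulOpposite.op_mul]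
    rw [← mul_assoc, hs.yb i h, mul_assoc]

theorem fwd_op (s : ℕ → M) (k : ℕ) :
    fwd (fun i => MulOpposite.op (s i)) k = MulOpposite.op (bwd s k) := by
  induction k with
  | zero => rfl
  | succ k ih => rw [fwd, ih, bwd, MulOpposite.op_mul]

theorem bwd_op (s : ℕ → M) (k : ℕ) :
    bwd (fun i => MulOpposite.op (s i)) k = MulOpposite.op (fwd s k) := by
  induction k with
  | zero => rfl
  | succ k ih => rw [fwd, bwd, ih, MulOpposite.op_mul]

theorem bwd_pow {s : ℕ → M} {N : ℕ} (hs : BraidRel s N) (k : ℕ) (hk : k + 1 ≤ N) :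
    bwd s (k + 1) ^ (k + 1) = fwd s (k + 1) * bwd s k ^ (k + 1) := by
  have := fwd_pow hs.op k hk
  simp only [fwd_op, bwd_op, ← MulOpposite.op_pow, ← MulOpposite.op_mul] at this
  exact MulOpposite.op_injective this

theorem slide_bwd {s : ℕ → M} {N : ℕ} (hs : BraidRel s N) (k : ℕ) (hk : k ≤ N) (i : ℕ)
    (hi : i + 1 < k) : bwd s k * s (i + 1) = s i * bwd s k := by
  have := slide hs.op k hk i hi
  simp only [fwd_op, bwd_op, ← MulOpposite.op_pow, ← MulOpposite.op_mul] at this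
  exact MulOpposite.op_injective this

theorem full_twist {s : ℕ → M} {N : ℕ} (hs : BraidRel s N) (k : ℕ) (hk : k ≤ N) :
    fwd s k ^ (k + 1) = bwd s k ^ (k + 1) := by
  induction k with
  | zero => rfl
  | succ k ih =>
    rw [pow_succ, fwd_pow hs k hk, pow_succ' (bwd s (k + 1)), bwd_pow hs k hk, ← ih (by omega)]
    have h : fwd s k * (bwd s (k + 1) * fwd s (k + 1)) =
        (bwd s (k + 1) * fwd s (k + 1)) * fwd s k := by
      apply fwd_comm
      intro i hi
      rw [← mul_assoc, ← slide_bwd hs (k + 1) hk i (by omega), mul_assoc,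
        slide hs (k + 1) hk i (by omega), mul_assoc]
    have h2 : Commute (fwd s k) (bwd s (k + 1) * fwd s (k + 1)) := h
    rw [mul_assoc, (h2.pow_left (k + 1)).eq, mul_assoc]

structure DecoRel (s f : ℕ → M) (N : ℕ) : Prop where
  far : ∀ i j, i < N → j ≤ N → j ≠ i → j ≠ i + 1 → s i * f j = f j * s i
  near : ∀ i, i < N → f (i + 1) * s i = s i * f i

theorem slide_deco {s f : ℕ → M} {N : ℕ} (h : DecoRel s f N) (k : ℕ) (hk : k ≤ N) (i : ℕ)
    (hi : i < k) : f (i + 1) * fwd s k = fwd s k * f i := by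
  induction k with
  | zero => omega
  | succ k ih =>
    rcases Nat.lt_or_ge i k with h' | h'
    · rw [fwd, ← mul_assoc, ih (by omega) h', mul_assoc,
        ← h.far k i (by omega) (by omega) (by omega) (by omega), mul_assoc]
    · obtain rfl : k = i := by omega
      have h1 : fwd s k * f (k + 1) = f (k + 1) * fwd s k :=
        fwd_comm s _ k (fun j hj => h.far j (k + 1) (by omega) (by omega) (by omega) (by omega))
      rw [fwd, ← mul_assoc, ← h1, mul_assoc, h.near k (by omega), mul_assoc]

/-- `f (N+1-m) * ⋯ * f N` -/
def top (f : ℕ → M) (N : ℕ) : ℕ → M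
  | 0 => 1
  | m + 1 => f (N - m) * top f N m

theorem top_slide {s f : ℕ → M} {N : ℕ} (h : DecoRel s f N) (m : ℕ) (hm : m ≤ N) :
    top f N m * (fwd s N * f N) = fwd s N * top f N (m + 1) := by
  induction m with
  | zero => simp [top]
  | succ m ih =>
    have h1 := slide_deco h N le_rfl (N - (m + 1)) (by omega)
    rw [show N - (m + 1) + 1 = N - m by omega] at h1
    rw [top, mul_assoc, ih (by omega), ← mul_assoc, h1, mul_assoc, ← top.eq_2 f N (m+1)]

theorem deco_pow {s f : ℕ → M} {N : ℕ} (h : DecoRel s f N) (m : ℕ) (hm : m ≤ N + 1) :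
    (fwd s N * f N) ^ m = fwd s N ^ m * top f N m := by
  induction m with
  | zero => simp [top]
  | succ m ih =>
    rw [pow_succ, ih (by omega), mul_assoc, top_slide h m (by omega), ← mul_assoc, ← pow_succ]

theorem fwd_top (f : ℕ → M) (N m j : ℕ) (hj : j + m = N + 1) :
    fwd f j * top f N m = fwd f (N + 1) := by
  induction m generalizing j with
  | zero => obtain rfl : j = N + 1 := by omega
            simp [top]
  | succ m ih =>
    rw [← ih (j + 1) (by omega), top, fwd, show N - m = j by omega, mul_assoc]

theorem deco_full {s f : ℕ → M} {N : ℕ} (h : DecoRel s f N) :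
    (fwd s N * f N) ^ (N + 1) = fwd s N ^ (N + 1) * fwd f (N + 1) := by
  rw [deco_pow h _ le_rfl, ← fwd_top f N (N + 1) 0 (by omega)]
  simp [fwd]

end Braid

section Tower

open MulOpposite

/-- Endomorphisms with multiplication in diagrammatic order. -/
abbrev EM (Y : C) : Type v := (End Y)ᵐᵒᵖ

abbrev toE {Y : C} (f : Y ⟶ Y) : EM Y := op (End.of f)

theorem toE_mul {Y : C} (f g : Y ⟶ Y) : toE f * toE g = toE (f ≫ g) := rfl

theorem toE_one {Y : C} : (1 : EM Y) = toE (𝟙 Y) := rfl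

theorem toE_inj {Y : C} {f g : Y ⟶ Y} (h : toE f = toE g) : f = g :=
  MulOpposite.op_injective h

theorem endoPow_eq {Y : C} (f : Y ⟶ Y) (n : ℕ) : toE (endoPow f n) = toE f ^ n := by
  induction n with
  | zero => rfl
  | succ n ih => rw [pow_succ', ← ih]; rfl

variable (X : C)

/-- The braiding of the last two strands. -/
def lastB : ∀ n : ℕ, tensorPow X (n + 2) ⟶ tensorPow X (n + 2)
  | 0 => (β_ X X).hom
  | n + 1 => (α_ (tensorPow X (n + 1)) X X).hom ≫ (tensorPow X (n + 1) ◁ (β_ X X).hom) ≫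
      (α_ (tensorPow X (n + 1)) X X).inv

def wr {n : ℕ} (f : tensorPow X (n + 1) ⟶ tensorPow X (n + 1)) :
    tensorPow X (n + 2) ⟶ tensorPow X (n + 2) := f ▷ X

def wl (n : ℕ) (φ : X ⟶ X) : tensorPow X (n + 2) ⟶ tensorPow X (n + 2) :=
  tensorPow X (n + 1) ◁ φ

def sOp : ∀ (n : ℕ) (_ : ℕ), (tensorPow X (n + 1) ⟶ tensorPow X (n + 1))
  | 0, _ => 𝟙 _
  | n + 1, i => if i = n then lastB X n else wr X (sOp n i)

def fOp (φ : X ⟶ X) : ∀ (n : ℕ) (_ : ℕ), (tensorPow X (n + 1) ⟶ tensorPow X (n + 1))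
  | 0, _ => φ
  | n + 1, i => if i = n + 1 then wl X n φ else wr X (fOp φ n i)

theorem sOp_last (n : ℕ) : sOp X (n + 1) n = lastB X n := by simp [sOp]

theorem sOp_lt (n i : ℕ) (h : i < n) : sOp X (n + 1) i = wr X (sOp X n i) := by
  rw [sOp, if_neg (by omega)]

theorem fOp_last (φ : X ⟶ X) (n : ℕ) :
    fOp X φ (n + 1) (n + 1) = wl X n φ := by simp [fOp]

theorem fOp_lt (φ : X ⟶ X) (n i : ℕ) (h : i < n + 1) :
    fOp X φ (n + 1) i = wr X (fOp X φ n i) := by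
  rw [fOp, if_neg (by omega)]

theorem wr_comp {n : ℕ} (f g : tensorPow X (n + 1) ⟶ tensorPow X (n + 1)) :
    wr X (f ≫ g) = wr X f ≫ wr X g := comp_whiskerRight _ _ _

theorem wr_last {n : ℕ} (f : tensorPow X (n + 1) ⟶ tensorPow X (n + 1)) :
    wr X (wr X f) ≫ lastB X (n + 1) = lastB X (n + 1) ≫ wr X (wr X f) := by
  change (f ▷ X) ▷ X ≫ (α_ (tensorPow X (n + 1)) X X).hom ≫
    (tensorPow X (n + 1) ◁ (β_ X X).hom) ≫ (α_ (tensorPow X (n + 1)) X X).inv =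
    ((α_ (tensorPow X (n + 1)) X X).hom ≫
    (tensorPow X (n + 1) ◁ (β_ X X).hom) ≫ (α_ (tensorPow X (n + 1)) X X).inv) ≫ (f ▷ X) ▷ X
  simp only [Category.assoc]
  rw [associator_naturality_left_assoc, ← whisker_exchange_assoc,
    ← associator_inv_naturality_left]

theorem yb_last (n : ℕ) : wr X (lastB X n) ≫ lastB X (n + 1) ≫ wr X (lastB X n) =
    lastB X (n + 1) ≫ wr X (lastB X n) ≫ lastB X (n + 1) := by
  have key := BraidedCategory.yang_baxter X X X
  cases n with
  | zero =>
    change ((β_ X X).hom ▷ X) ≫ ((α_ X X X).hom ≫ (X ◁ (β_ X X).hom) ≫ (α_ X X X).inv) ≫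
      ((β_ X X).hom ▷ X) = ((α_ X X X).hom ≫ (X ◁ (β_ X X).hom) ≫ (α_ X X X).inv) ≫
      ((β_ X X).hom ▷ X) ≫ ((α_ X X X).hom ≫ (X ◁ (β_ X X).hom) ≫ (α_ X X X).inv)
    rw [← cancel_epi (α_ X X X).inv, ← cancel_mono (α_ X X X).hom]
    simpa using key
  | succ n =>
    change (((α_ (tensorPow X (n + 1)) X X).hom ≫ (tensorPow X (n + 1) ◁ (β_ X X).hom) ≫
      (α_ (tensorPow X (n + 1)) X X).inv) ▷ X) ≫
      ((α_ (tensorPow X (n + 1) ⊗ X) X X).hom ≫ ((tensorPow X (n + 1) ⊗ X) ◁ (β_ X X).hom) ≫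
      (α_ (tensorPow X (n + 1) ⊗ X) X X).inv) ≫
      (((α_ (tensorPow X (n + 1)) X X).hom ≫ (tensorPow X (n + 1) ◁ (β_ X X).hom) ≫
      (α_ (tensorPow X (n + 1)) X X).inv) ▷ X) =
      ((α_ (tensorPow X (n + 1) ⊗ X) X X).hom ≫ ((tensorPow X (n + 1) ⊗ X) ◁ (β_ X X).hom) ≫
      (α_ (tensorPow X (n + 1) ⊗ X) X X).inv) ≫
      (((α_ (tensorPow X (n + 1)) X X).hom ≫ (tensorPow X (n + 1) ◁ (β_ X X).hom) ≫
      (α_ (tensorPow X (n + 1)) X X).inv) ▷ X) ≫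
      ((α_ (tensorPow X (n + 1) ⊗ X) X X).hom ≫ ((tensorPow X (n + 1) ⊗ X) ◁ (β_ X X).hom) ≫
      (α_ (tensorPow X (n + 1) ⊗ X) X X).inv)
    generalize tensorPow X (n + 1) = Y
    have key2 := congrArg (fun z => (α_ (Y ⊗ X) X X).hom ≫ (α_ Y X (X ⊗ X)).hom ≫ (Y ◁ z) ≫
      (α_ Y X (X ⊗ X)).inv ≫ (α_ (Y ⊗ X) X X).inv) key
    calc _ = _ := by monoidal
      _ = _ := key2
      _ = _ := by monoidal

theorem sOp_braid (n : ℕ) : BraidRel (fun i => toE (sOp X n i)) n := by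
  induction n with
  | zero => exact ⟨fun i j _ h => by omega, fun i h => by omega⟩
  | succ n ih =>
    constructor
    · intro i j h1 h2
      simp only [toE_mul]
      rcases Nat.lt_or_ge j n with h | h
      · rw [sOp_lt X n i (by omega), sOp_lt X n j h, ← wr_comp, ← wr_comp]
        have : sOp X n i ≫ sOp X n j = sOp X n j ≫ sOp X n i := toE_inj (ih.far i j h1 h)
        rw [this]
      · obtain rfl : j = n := by omega
        obtain ⟨m, rfl⟩ : ∃ m, j = m + 1 := ⟨j - 1, by omega⟩
        rw [sOp_last, sOp_lt X _ i (by omega), sOp_lt X _ i (by omega), wr_last]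
    · intro i h
      simp only [toE_mul]
      rcases Nat.lt_or_ge (i + 1) n with h' | h'
      · rw [sOp_lt X n i (by omega), sOp_lt X n (i + 1) h']
        simp only [← wr_comp]
        have : (sOp X n i ≫ sOp X n (i + 1)) ≫ sOp X n i =
          (sOp X n (i + 1) ≫ sOp X n i) ≫ sOp X n (i + 1) := toE_inj (ih.yb i h')
        rw [this]
      · obtain rfl : n = i + 1 := by omega
        rw [sOp_last, sOp_lt X _ i (by omega), sOp_last]
        congr 1
        simpa only [Category.assoc] using yb_last X i

theorem fOp_last_comm (φ : X ⟶ X) (n : ℕ) (f : tensorPow X (n + 1) ⟶ tensorPow X (n + 1)) :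
    wr X f ≫ fOp X φ (n + 1) (n + 1) = fOp X φ (n + 1) (n + 1) ≫ wr X f := by
  rw [fOp_last]
  exact (whisker_exchange f φ).symm

theorem fOp_near_last (φ : X ⟶ X) (n : ℕ) :
    fOp X φ (n + 1) (n + 1) ≫ lastB X n = lastB X n ≫ fOp X φ (n + 1) n := by
  rw [fOp_last, fOp_lt X φ n n (by omega)]
  cases n with
  | zero =>
    change X ◁ φ ≫ (β_ X X).hom = (β_ X X).hom ≫ φ ▷ X
    simp
  | succ n =>
    rw [fOp_last]
    change (tensorPow X (n + 1) ⊗ X) ◁ φ ≫ (α_ (tensorPow X (n + 1)) X X).hom ≫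
      (tensorPow X (n + 1) ◁ (β_ X X).hom) ≫ (α_ (tensorPow X (n + 1)) X X).inv =
      ((α_ (tensorPow X (n + 1)) X X).hom ≫
      (tensorPow X (n + 1) ◁ (β_ X X).hom) ≫ (α_ (tensorPow X (n + 1)) X X).inv) ≫
      (tensorPow X (n + 1) ◁ φ) ▷ X
    generalize tensorPow X (n + 1) = Y
    have key2 := congrArg (fun z => (α_ Y X X).hom ≫ (Y ◁ z) ≫ (α_ Y X X).inv)
      (BraidedCategory.braiding_naturality_right X φ)
    calc _ = _ := by monoidal
      _ = _ := key2
      _ = _ := by monoidal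

theorem fOp_deco (φ : X ⟶ X) (n : ℕ) :
    DecoRel (fun i => toE (sOp X n i)) (fun i => toE (fOp X φ n i)) n := by
  induction n with
  | zero => exact ⟨fun i j h => by omega, fun i h => by omega⟩
  | succ n ih =>
    constructor
    · intro i j h1 h2 h3 h4
      simp only [toE_mul]
      rcases Nat.lt_or_ge i n with h | h
      · rw [sOp_lt X n i h]
        rcases Nat.lt_or_ge j (n + 1) with h' | h'
        · rw [fOp_lt X φ n j h', ← wr_comp, ← wr_comp]
          have : sOp X n i ≫ fOp X φ n j = fOp X φ n j ≫ sOp X n i :=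
            toE_inj (ih.far i j h (by omega) h3 h4)
          rw [this]
        · obtain rfl : j = n + 1 := by omega
          rw [fOp_last_comm]
      · obtain rfl : i = n := by omega
        obtain ⟨m, rfl⟩ : ∃ m, i = m + 1 := ⟨i - 1, by omega⟩
        rw [sOp_last, fOp_lt X φ _ j (by omega), fOp_lt X φ _ j (by omega), wr_last]
    · intro i h
      simp only [toE_mul]
      rcases Nat.lt_or_ge i n with h' | h'
      · rw [sOp_lt X n i h', fOp_lt X φ n i (by omega), fOp_lt X φ n (i + 1) (by omega),
          ← wr_comp, ← wr_comp]
        have : fOp X φ n (i + 1) ≫ sOp X n i = sOp X n i ≫ fOp X φ n i := toE_inj (ih.near i h')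
        rw [this]
      · obtain rfl : i = n := by omega
        rw [sOp_last, fOp_near_last]

/-- Rotation of the first strand over all the others. -/
def rot : ∀ n : ℕ, tensorPow X (n + 1) ⟶ tensorPow X (n + 1)
  | 0 => 𝟙 X
  | n + 1 => (tensorPowCons X (n + 1)).inv ≫ (β_ X (tensorPow X (n + 1))).hom

theorem rot_succ (n : ℕ) : rot X (n + 1) = wr X (rot X n) ≫ lastB X n := by
  cases n with
  | zero =>
    change 𝟙 (X ⊗ X) ≫ (β_ X X).hom = 𝟙 X ▷ X ≫ (β_ X X).hom
    simp
  | succ n =>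
    change ((tensorPowCons X (n + 1)).inv ▷ X ≫ (α_ X (tensorPow X (n + 1)) X).hom) ≫
      (β_ X (tensorPow X (n + 1) ⊗ X)).hom =
      ((tensorPowCons X (n + 1)).inv ≫ (β_ X (tensorPow X (n + 1))).hom) ▷ X ≫
      (α_ (tensorPow X (n + 1)) X X).hom ≫ (tensorPow X (n + 1) ◁ (β_ X X).hom) ≫
      (α_ (tensorPow X (n + 1)) X X).inv
    simp [BraidedCategory.braiding_tensor_right_hom]

theorem braid_succ (n : ℕ) :
    tensorPowBraid X (n + 1) = lastB X n ≫ wr X (tensorPowBraid X n) := by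
  cases n with
  | zero =>
    change (β_ X X).hom ≫ 𝟙 (X ⊗ X) = (β_ X X).hom ≫ 𝟙 X ▷ X
    simp
  | succ n =>
    change (β_ (tensorPow X (n + 1) ⊗ X) X).hom ≫ ((α_ X (tensorPow X (n + 1)) X).inv ≫
      (tensorPowCons X (n + 1)).hom ▷ X) =
      ((α_ (tensorPow X (n + 1)) X X).hom ≫ (tensorPow X (n + 1) ◁ (β_ X X).hom) ≫
      (α_ (tensorPow X (n + 1)) X X).inv) ≫
      ((β_ (tensorPow X (n + 1)) X).hom ≫ (tensorPowCons X (n + 1)).hom) ▷ X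
    simp [BraidedCategory.braiding_tensor_left_hom]

/-- Whiskering as a monoid homomorphism. -/
def wrE (n : ℕ) : EM (tensorPow X (n + 1)) →* EM (tensorPow X (n + 2)) where
  toFun f := toE (wr X f.unop)
  map_one' := congrArg toE (id_whiskerRight (tensorPow X (n + 1)) X)
  map_mul' f g := congrArg toE (wr_comp X f.unop g.unop)

theorem wrE_toE {n : ℕ} (f : tensorPow X (n + 1) ⟶ tensorPow X (n + 1)) :
    wrE X n (toE f) = toE (wr X f) := rfl

theorem map_fwd {M N : Type*} [Monoid M] [Monoid N] (F : M →* N) (s : ℕ → M) (t : ℕ → N)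
    (k : ℕ) (h : ∀ i < k, t i = F (s i)) : fwd t k = F (fwd s k) := by
  induction k with
  | zero => simp [fwd]
  | succ k ih => rw [fwd, fwd, map_mul, ih (fun i hi => h i (by omega)), h k (by omega)]

theorem map_bwd {M N : Type*} [Monoid M] [Monoid N] (F : M →* N) (s : ℕ → M) (t : ℕ → N)
    (k : ℕ) (h : ∀ i < k, t i = F (s i)) : bwd t k = F (bwd s k) := by
  induction k with
  | zero => simp [bwd]
  | succ k ih => rw [bwd, bwd, map_mul, ih (fun i hi => h i (by omega)), h k (by omega)]

theorem fwd_wr (n : ℕ) : fwd (fun i => toE (sOp X (n + 1) i)) n =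
    wrE X n (fwd (fun i => toE (sOp X n i)) n) :=
  map_fwd _ _ _ _ (fun i hi => by rw [wrE_toE, sOp_lt X n i hi])

theorem fwd_eq_rot (n : ℕ) : fwd (fun i => toE (sOp X n i)) n = toE (rot X n) := by
  induction n with
  | zero => rfl
  | succ n ih =>
    rw [fwd, fwd_wr, ih, wrE_toE, toE_mul, rot_succ, sOp_last]

theorem bwd_eq_braid (n : ℕ) :
    bwd (fun i => toE (sOp X n i)) n = toE (tensorPowBraid X n) := by
  induction n with
  | zero => rfl
  | succ n ih =>
    rw [bwd, map_bwd (wrE X n) (fun i => toE (sOp X n i)) _ n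
      (fun i hi => by rw [wrE_toE, sOp_lt X n i hi]), ih, wrE_toE, toE_mul, braid_succ, sOp_last]

/-- `φ ⊗ ⋯ ⊗ φ` -/
def diagOp (φ : X ⟶ X) : ∀ n : ℕ, tensorPow X (n + 1) ⟶ tensorPow X (n + 1)
  | 0 => φ
  | n + 1 => diagOp φ n ⊗ₘ φ

theorem fwd_eq_diag (φ : X ⟶ X) (n : ℕ) :
    fwd (fun i => toE (fOp X φ n i)) (n + 1) = toE (diagOp X φ n) := by
  induction n with
  | zero => exact one_mul _
  | succ n ih =>
    rw [fwd, map_fwd (wrE X n) (fun i => toE (fOp X φ n i)) _ (n + 1)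
      (fun i hi => by rw [wrE_toE, fOp_lt X φ n i hi]), ih, wrE_toE, toE_mul, fOp_last]
    exact congrArg toE (tensorHom_def (diagOp X φ n) φ).symm

/-- The decorated rotation. -/
def trot (φ : X ⟶ X) (n : ℕ) : tensorPow X (n + 2) ⟶ tensorPow X (n + 2) :=
  rot X (n + 1) ≫ wl X n φ

theorem trot_pow (φ : X ⟶ X) (n : ℕ) :
    endoPow (trot X φ n) (n + 2) =
      rot X (n + 1) ≫ wr X (endoPow (tensorPowBraid X n) (n + 1)) ≫
        tensorPowBraid X (n + 1) ≫ diagOp X φ (n + 1) := by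
  apply toE_inj
  have h1 : toE (trot X φ n) = fwd (fun i => toE (sOp X (n + 1) i)) (n + 1) *
      toE (fOp X φ (n + 1) (n + 1)) := by
    rw [fwd_eq_rot, toE_mul, fOp_last]; rfl
  have h2 := fwd_pow (sOp_braid X (n + 1)) n le_rfl
  rw [endoPow_eq, h1, deco_full (fOp_deco X φ (n + 1)), fwd_eq_diag, pow_succ', h2, fwd_wr,
    ← map_pow, full_twist (sOp_braid X n) n le_rfl, bwd_eq_braid, bwd_eq_braid, fwd_eq_rot,
    ← endoPow_eq, wrE_toE]
  simp only [toE_mul, Category.assoc]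

end Tower

section Hopf

variable (A : _root_.HopfObj C)

theorem mul_comul' : A.mul ≫ A.comul =
    (A.comul ⊗ₘ A.comul) ≫ tensorμ A.X A.X A.X A.X ≫ (A.mul ⊗ₘ A.mul) := by
  rw [A.mul_comul]; simp only [tensorμ, Category.assoc]

theorem mul_antipode' :
    A.mul ≫ A.antipode = (A.antipode ⊗ₘ A.antipode) ≫ (β_ A.X A.X).hom ≫ A.mul := by
  let _ : MonObj A.X := ⟨A.one, A.mul, A.one_mul, A.mul_one, A.mul_assoc⟩
  let _ : ComonObj A.X := ⟨A.counit, A.comul, A.counit_comul, A.comul_counit, A.comul_assoc.symm⟩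
  let _ : BimonObj A.X :=
    { mul_comul := mul_comul' A
      one_comul := A.one_comul
      mul_counit := A.mul_counit
      one_counit := A.one_counit }
  let _ : CategoryTheory.HopfObj A.X :=
    { antipode := A.antipode
      antipode_left := A.antipode_left
      antipode_right := A.antipode_right }
  exact CategoryTheory.HopfObj.mul_antipode A.X

/-- Tensor product action. -/
def actT {M N : C} (a : A.X ⊗ M ⟶ M) (b : A.X ⊗ N ⟶ N) : A.X ⊗ (M ⊗ N) ⟶ M ⊗ N :=
  A.comul ▷ (M ⊗ N) ≫ tensorμ A.X A.X M N ≫ (a ⊗ₘ b)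

def IsAct {M : C} (a : A.X ⊗ M ⟶ M) : Prop :=
  A.mul ▷ M ≫ a = (α_ A.X A.X M).hom ≫ A.X ◁ a ≫ a

theorem isAct_actT {M N : C} (a : A.X ⊗ M ⟶ M) (b : A.X ⊗ N ⟶ N)
    (ha : IsAct A a) (hb : IsAct A b) : IsAct A (actT A a b) := by
  unfold IsAct actT at *
  calc _ = ((A.mul ≫ A.comul) ▷ (M ⊗ N)) ≫ tensorμ A.X A.X M N ≫ (a ⊗ₘ b) := by simp
    _ = (A.comul ⊗ₘ A.comul) ▷ (M ⊗ N) ≫ tensorμ A.X A.X A.X A.X ▷ (M ⊗ N) ≫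
        ((A.mul ⊗ₘ A.mul) ▷ (M ⊗ N) ≫ tensorμ A.X A.X M N) ≫ (a ⊗ₘ b) := by
        rw [mul_comul']; simp
    _ = (A.comul ⊗ₘ A.comul) ▷ (M ⊗ N) ≫ tensorμ A.X A.X A.X A.X ▷ (M ⊗ N) ≫
        tensorμ (A.X ⊗ A.X) (A.X ⊗ A.X) M N ≫ ((A.mul ▷ M ≫ a) ⊗ₘ (A.mul ▷ N ≫ b)) := by
        rw [tensorμ_natural_left]; simp only [Category.assoc, tensorHom_comp_tensorHom]
    _ = (A.comul ⊗ₘ A.comul) ▷ (M ⊗ N) ≫ (tensorμ A.X A.X A.X A.X ▷ (M ⊗ N) ≫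
        tensorμ (A.X ⊗ A.X) (A.X ⊗ A.X) M N ≫ ((α_ A.X A.X M).hom ⊗ₘ (α_ A.X A.X N).hom)) ≫
        (A.X ◁ a ⊗ₘ A.X ◁ b) ≫ (a ⊗ₘ b) := by
        rw [ha, hb]; simp only [Category.assoc, tensorHom_comp_tensorHom]
    _ = (A.comul ⊗ₘ A.comul) ▷ (M ⊗ N) ≫ (α_ (A.X ⊗ A.X) (A.X ⊗ A.X) (M ⊗ N)).hom ≫
        (A.X ⊗ A.X) ◁ tensorμ A.X A.X M N ≫
        ((A.X ⊗ A.X) ◁ (a ⊗ₘ b) ≫ tensorμ A.X A.X M N) ≫ (a ⊗ₘ b) := by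
        rw [tensor_associativity, tensorμ_natural_right]; simp only [Category.assoc]
    _ = _ := by
        rw [MonoidalCategory.tensorHom_def A.comul]
        simp only [comp_whiskerRight, Category.assoc, whiskerLeft_comp, whisker_assoc,
          associator_naturality_left_assoc, Iso.inv_hom_id_assoc]
        simp only [← whisker_exchange_assoc]

theorem actT_assoc {M N K : C} (a : A.X ⊗ M ⟶ M) (b : A.X ⊗ N ⟶ N) (c : A.X ⊗ K ⟶ K) :
    actT A (actT A a b) c ≫ (α_ M N K).hom =
      A.X ◁ (α_ M N K).hom ≫ actT A a (actT A b c) := by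
  unfold actT
  have e1 : (A.comul ▷ (M ⊗ N) ≫ tensorμ A.X A.X M N ≫ (a ⊗ₘ b) ⊗ₘ c) =
      (A.comul ▷ (M ⊗ N) ⊗ₘ 𝟙 _) ≫ (tensorμ A.X A.X M N ▷ (A.X ⊗ K)) ≫ ((a ⊗ₘ b) ⊗ₘ c) := by
    rw [← tensorHom_id (tensorμ A.X A.X M N), tensorHom_comp_tensorHom, tensorHom_comp_tensorHom]; simp
  have e2 : (a ⊗ₘ A.comul ▷ (N ⊗ K) ≫ tensorμ A.X A.X N K ≫ (b ⊗ₘ c)) =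
      (𝟙 _ ⊗ₘ A.comul ▷ (N ⊗ K)) ≫ ((A.X ⊗ M) ◁ tensorμ A.X A.X N K) ≫ (a ⊗ₘ b ⊗ₘ c) := by
    rw [← id_tensorHom _ (tensorμ A.X A.X N K), tensorHom_comp_tensorHom, tensorHom_comp_tensorHom]; simp
  have n1 := tensorμ_natural_left A.comul (𝟙 A.X) (M ⊗ N) K
  have n2 := tensorμ_natural_left (𝟙 A.X) A.comul M (N ⊗ K)
  rw [id_whiskerRight] at n1 n2
  rw [e1, e2]
  simp only [Category.assoc]
  rw [← reassoc_of% n1, ← reassoc_of% n2, associator_naturality]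
  have am := associator_monoidal A.X A.X A.X M N K
  rw [reassoc_of% am]
  have hc := A.comul_assoc
  simp only [tensorHom_id, id_tensorHom]
  have hc' := congrArg (fun z => z ▷ ((M ⊗ N) ⊗ K)) hc
  simp only [comp_whiskerRight, MonoidalCategory.tensorHom_def (α_ A.X A.X A.X).hom, Category.assoc] at hc' ⊢
  rw [reassoc_of% hc']
  simp only [← whisker_exchange_assoc]

end Hopf

section Hopf2

theorem shift1 (X Y Z M : C) :
    tensorμ X Y Z M ≫ (β_ X Z).hom ▷ (Y ⊗ M) ≫ (α_ Z X (Y ⊗ M)).hom ≫ Z ◁ (α_ X Y M).inv =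
      (α_ (X ⊗ Y) Z M).inv ≫ (β_ (X ⊗ Y) Z).hom ▷ M ≫ (α_ Z (X ⊗ Y) M).hom := by
  rw [BraidedCategory.braiding_tensor_left_hom]
  simp only [tensorμ]
  monoidal

theorem shift2 (X Y Z M : C) :
    (X ⊗ Y) ◁ (β_ Z M).hom ≫ tensorμ X Y M Z =
      (α_ X Y (Z ⊗ M)).hom ≫ X ◁ (α_ Y Z M).inv ≫ X ◁ (β_ (Y ⊗ Z) M).hom ≫
        (α_ X M (Y ⊗ Z)).inv := by
  rw [BraidedCategory.braiding_tensor_left_hom]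
  simp only [tensorμ]
  monoidal

variable (A : _root_.HopfObj C)

theorem one_antipode : A.one ≫ A.antipode = A.one := by
  have h := congrArg (fun z => A.one ≫ z) A.antipode_left
  simp only [reassoc_of% A.one_comul, reassoc_of% A.one_counit] at h
  rw [MonoidalCategory.tensorHom_def] at h
  simp only [Category.assoc, whisker_exchange_assoc, A.mul_one] at h
  rw [← comp_whiskerRight_assoc, rightUnitor_naturality, ← unitors_equal,
    Iso.inv_hom_id_assoc] at h
  exact h

theorem one_twist (δ : A.X ⟶ 𝟙_ C) (hδ : A.IsCharacter δ) : A.one ≫ A.twist δ = A.one := by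
  unfold HopfObj.twist
  rw [reassoc_of% A.one_comul, tensorHom_comp_tensorHom_assoc, hδ.2, one_antipode]
  simp

theorem twist_inv (δ : A.X ⟶ 𝟙_ C) : 
    A.comul ≫ A.twist δ ▷ A.X ≫ A.mul = δ ≫ A.one := by
  unfold HopfObj.twist
  have hc := A.comul_assoc
  calc _ = (A.comul ≫ A.comul ▷ A.X ≫ (α_ A.X A.X A.X).hom) ≫ δ ▷ (A.X ⊗ A.X) ≫ 
        (λ_ (A.X ⊗ A.X)).hom ≫ A.antipode ▷ A.X ≫ A.mul := by
        simp [MonoidalCategory.tensorHom_def]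
    _ = A.comul ≫ δ ▷ A.X ≫ (λ_ A.X).hom ≫ (A.comul ≫ A.antipode ▷ A.X ≫ A.mul) := by
        rw [hc, Category.assoc, whisker_exchange_assoc, leftUnitor_naturality_assoc]
    _ = (A.comul ≫ A.X ◁ A.counit) ≫ δ ▷ (𝟙_ C) ≫ (λ_ (𝟙_ C)).hom ≫ A.one := by
        rw [A.antipode_left, Category.assoc, whisker_exchange_assoc, leftUnitor_naturality_assoc]
    _ = _ := by
        rw [A.comul_counit]; simp [unitors_equal]

theorem unit_mu (X : C) : tensorμ (𝟙_ C) X (𝟙_ C) X ≫ ((λ_ (𝟙_ C)).hom ▷ (X ⊗ X)) ≫ (λ_ (X ⊗ X)).hom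
   = ((λ_ X).hom ⊗ₘ (λ_ X).hom) := by
  simp only [tensorμ, braiding_tensorUnit_right]
  monoidal

theorem mul_twist (δ : A.X ⟶ 𝟙_ C) (hδ : A.IsCharacter δ) :
    A.mul ≫ A.twist δ = (A.twist δ ⊗ₘ A.twist δ) ≫ (β_ A.X A.X).hom ≫ A.mul := by
  unfold HopfObj.twist
  rw [reassoc_of% mul_comul' A, tensorHom_comp_tensorHom_assoc, hδ.1, mul_antipode']
  calc _ = (A.comul ⊗ₘ A.comul) ≫ (tensorμ A.X A.X A.X A.X ≫ ((δ ⊗ₘ δ) ⊗ₘ (A.antipode ⊗ₘ A.antipode))) ≫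
        (λ_ (𝟙_ C)).hom ▷ (A.X ⊗ A.X) ≫ (λ_ _).hom ≫ (β_ A.X A.X).hom ≫ A.mul := by
        simp [MonoidalCategory.tensorHom_def, whisker_exchange_assoc]
    _ = _ := by
        rw [← tensorμ_natural]
        simp only [Category.assoc]
        rw [reassoc_of% unit_mu A.X]
        simp only [tensorHom_comp_tensorHom_assoc]

theorem keyA (δ : A.X ⟶ 𝟙_ C) (hδ : A.IsCharacter δ) {M : C} (a : A.X ⊗ M ⟶ M)
    (ha : IsAct A a) (h1 : A.one ▷ M ≫ a = (λ_ M).hom) :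
    actT A A.mul a ≫ A.twist δ ▷ M ≫ a =
      δ ▷ (A.X ⊗ M) ≫ (λ_ (A.X ⊗ M)).hom ≫ A.twist δ ▷ M ≫ a := by
  have h2 := mul_twist A δ hδ
  have h3 := twist_inv A δ
  unfold actT
  unfold IsAct at ha
  generalize A.twist δ = T at *
  have ha' : A.X ◁ a ≫ a = (α_ A.X A.X M).inv ≫ A.mul ▷ M ≫ a := by rw [ha]; simp
  have n1 := tensorμ_natural T T (𝟙 A.X) (𝟙 M)
  calc _ = A.comul ▷ (A.X ⊗ M) ≫ tensorμ A.X A.X A.X M ≫ ((A.mul ≫ T) ▷ (A.X ⊗ M)) ≫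
          A.X ◁ a ≫ a := by
        simp [MonoidalCategory.tensorHom_def, whisker_exchange_assoc]
    _ = A.comul ▷ (A.X ⊗ M) ≫ tensorμ A.X A.X A.X M ≫ (T ⊗ₘ T) ▷ (A.X ⊗ M) ≫
          (β_ A.X A.X).hom ▷ (A.X ⊗ M) ≫ (α_ A.X A.X (A.X ⊗ M)).hom ≫
          A.X ◁ (A.X ◁ a ≫ a) ≫ a := by
        rw [h2]
        simp only [comp_whiskerRight, Category.assoc]
        rw [← whisker_exchange_assoc A.mul, ha]
        simp
    _ = A.comul ▷ (A.X ⊗ M) ≫ (tensorμ A.X A.X A.X M ≫ 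
          (β_ A.X A.X).hom ▷ (A.X ⊗ M) ≫ (α_ A.X A.X (A.X ⊗ M)).hom ≫ A.X ◁ (α_ A.X A.X M).inv) ≫
          A.X ◁ ((T ▷ A.X) ▷ M ≫ A.mul ▷ M ≫ a) ≫ T ▷ M ≫ a := by
        rw [ha']
        rw [whisker_exchange_assoc T, ← comp_whiskerRight_assoc, BraidedCategory.braiding_naturality]
        simp [MonoidalCategory.tensorHom_def]
    _ = (α_ A.X A.X M).inv ≫ (A.comul ▷ A.X ≫ (β_ (A.X ⊗ A.X) A.X).hom) ▷ M ≫
          (α_ A.X (A.X ⊗ A.X) M).hom ≫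
          A.X ◁ ((T ▷ A.X) ▷ M ≫ A.mul ▷ M ≫ a) ≫ T ▷ M ≫ a := by
        rw [shift1]; simp
    _ = (α_ A.X A.X M).inv ≫ (β_ A.X A.X).hom ▷ M ≫
          (α_ A.X A.X M).hom ≫
          A.X ◁ ((A.comul ≫ T ▷ A.X ≫ A.mul) ▷ M ≫ a) ≫ T ▷ M ≫ a := by
        rw [BraidedCategory.braiding_naturality_left]; simp
    _ = (α_ A.X A.X M).inv ≫ (δ ▷ A.X ≫ (β_ (𝟙_ C) A.X).hom) ▷ M ≫
          (α_ A.X (𝟙_ C) M).hom ≫ A.X ◁ (λ_ M).hom ≫ T ▷ M ≫ a := by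
        rw [h3, BraidedCategory.braiding_naturality_left, ← h1]; simp
    _ = _ := by
        rw [braiding_tensorUnit_left]; simp

/-- right multiplication by `σ` -/
def rmul (σ : 𝟙_ C ⟶ A.X) : A.X ⟶ A.X := (ρ_ A.X).inv ≫ A.X ◁ σ ≫ A.mul

theorem mul_rmul (σ : 𝟙_ C ⟶ A.X) : A.X ◁ rmul A σ ≫ A.mul = A.mul ≫ rmul A σ := by
  unfold rmul
  have h : A.X ◁ A.mul ≫ A.mul = (α_ A.X A.X A.X).inv ≫ A.mul ▷ A.X ≫ A.mul := by
    rw [A.mul_assoc]; simp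
  simp only [whiskerLeft_comp, Category.assoc, h]
  rw [rightUnitor_inv_naturality_assoc, ← whisker_exchange_assoc]
  simp

theorem one_rmul (σ : 𝟙_ C ⟶ A.X) : A.one ≫ rmul A σ = σ := by
  unfold rmul
  rw [rightUnitor_inv_naturality_assoc, ← whisker_exchange_assoc, A.one_mul,
    leftUnitor_naturality, unitors_equal, Iso.inv_hom_id_assoc]

theorem keyB (δ : A.X ⟶ 𝟙_ C) (σ : 𝟙_ C ⟶ A.X) {M Z : C} (a : A.X ⊗ M ⟶ M)
    (p : M ⊗ A.X ⟶ Z)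
    (hp : actT A a A.mul ≫ p = δ ▷ (M ⊗ A.X) ≫ (λ_ (M ⊗ A.X)).hom ≫ p) :
    a ≫ (ρ_ M).inv ≫ M ◁ σ ≫ p =
      (β_ A.X M).hom ≫ M ◁ (A.twist δ ≫ rmul A σ) ≫ p := by
  let G := A.antipode ≫ rmul A σ
  have hG : A.comul ≫ A.X ◁ G ≫ A.mul = A.counit ≫ σ := by
    simp only [G, whiskerLeft_comp, Category.assoc, mul_rmul]
    rw [reassoc_of% A.antipode_right, one_rmul]
  let g := A.comul ▷ M ≫ (α_ A.X A.X M).hom ≫ A.X ◁ ((β_ A.X M).hom ≫ M ◁ G)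
  have e1 : g ≫ actT A a A.mul = a ≫ (ρ_ M).inv ≫ M ◁ σ := by
    unfold actT g
    calc _ = ((A.comul ≫ A.comul ▷ A.X ≫ (α_ A.X A.X A.X).hom) ▷ M) ≫
          (α_ A.X (A.X ⊗ A.X) M).hom ≫ A.X ◁ (α_ A.X A.X M).hom ≫ (α_ A.X A.X (A.X ⊗ M)).inv ≫ 
          ((A.X ⊗ A.X) ◁ (β_ A.X M).hom ≫ tensorμ A.X A.X M A.X) ≫
          (a ⊗ₘ (A.X ◁ G ≫ A.mul)) := by
          have n := tensorμ_natural_right A.X A.X (𝟙 M) G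
          simp only [id_tensorHom, whiskerLeft_id] at n
          have e : (a ⊗ₘ (A.X ◁ G ≫ A.mul)) = (A.X ⊗ M) ◁ (A.X ◁ G) ≫ (a ⊗ₘ A.mul) := by
            simp [MonoidalCategory.tensorHom_def']
          rw [e]
          simp only [whiskerLeft_comp, Category.assoc]
          rw [← reassoc_of% n, whisker_exchange_assoc, whisker_exchange_assoc]
          simp
      _ = (A.comul ▷ M) ≫ (α_ A.X A.X M).hom ≫ A.X ◁ (A.comul ▷ M ≫ (β_ (A.X ⊗ A.X) M).hom) ≫
          (α_ A.X M (A.X ⊗ A.X)).inv ≫ (a ⊗ₘ (A.X ◁ G ≫ A.mul)) := by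
          rw [A.comul_assoc, shift2]; simp
      _ = (A.comul ▷ M) ≫ (α_ A.X A.X M).hom ≫ A.X ◁ (β_ A.X M).hom ≫
          (α_ A.X M A.X).inv ≫ (a ⊗ₘ (A.comul ≫ A.X ◁ G ≫ A.mul)) := by
          rw [BraidedCategory.braiding_naturality_left]; simp [MonoidalCategory.tensorHom_def']
      _ = (A.comul ≫ A.X ◁ A.counit) ▷ M ≫ (α_ A.X (𝟙_ C) M).hom ≫ A.X ◁ (β_ (𝟙_ C) M).hom ≫
          (α_ A.X M (𝟙_ C)).inv ≫ (a ⊗ₘ σ) := by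
          rw [hG, comp_whiskerRight_assoc, whisker_assoc]
          simp only [Category.assoc, Iso.inv_hom_id_assoc]
          rw [← whiskerLeft_comp_assoc, BraidedCategory.braiding_naturality_left]
          simp [MonoidalCategory.tensorHom_def']
      _ = _ := by
          rw [A.comul_counit, braiding_tensorUnit_left]
          simp [MonoidalCategory.tensorHom_def]
  have e2 : g ≫ δ ▷ (M ⊗ A.X) ≫ (λ_ (M ⊗ A.X)).hom =
      (β_ A.X M).hom ≫ M ◁ (A.twist δ ≫ rmul A σ) := by
    rw [← BraidedCategory.braiding_naturality_left]
    simp only [g, G]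
    unfold HopfObj.twist
    simp only [Category.assoc]
    rw [whisker_exchange_assoc, leftUnitor_naturality, 
      ← BraidedCategory.braiding_naturality_left]
    simp [MonoidalCategory.tensorHom_def]
  have := congrArg (fun z => g ≫ z) hp
  simp only [reassoc_of% e1, reassoc_of% e2] at this
  simpa using this

end Hopf2
section Hopf3

variable (A : _root_.HopfObj C)

def lmul (σ : 𝟙_ C ⟶ A.X) {M : C} (a : A.X ⊗ M ⟶ M) : M ⟶ M := (λ_ M).inv ≫ σ ▷ M ≫ a

theorem lmul_actT (σ : 𝟙_ C ⟶ A.X) (hσ : σ ≫ A.comul = (λ_ (𝟙_ C)).inv ≫ (σ ⊗ₘ σ))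
    {M N : C} (a : A.X ⊗ M ⟶ M) (b : A.X ⊗ N ⟶ N) :
    lmul A σ (actT A a b) = (lmul A σ a ⊗ₘ lmul A σ b) := by
  unfold lmul actT
  rw [← comp_whiskerRight_assoc, hσ, comp_whiskerRight_assoc,
    reassoc_of% tensorμ_natural_left σ σ M N]
  have h := tensor_left_unitality M N
  rw [← cancel_epi (λ_ (M ⊗ N)).hom, Iso.hom_inv_id_assoc, h]
  simp only [Category.assoc, tensorHom_comp_tensorHom, Iso.hom_inv_id_assoc]

theorem actT_natural {M M' N : C} (f : M ⟶ M') (a : A.X ⊗ M ⟶ M) (a' : A.X ⊗ M' ⟶ M')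
    (b : A.X ⊗ N ⟶ N) (h : A.X ◁ f ≫ a' = a ≫ f) :
    A.X ◁ (f ▷ N) ≫ actT A a' b = actT A a b ≫ f ▷ N := by
  unfold actT
  have n := tensorμ_natural_right A.X A.X f (𝟙 N)
  rw [tensorHom_id, whiskerLeft_id] at n
  rw [whisker_exchange_assoc, reassoc_of% n, tensorHom_comp_tensorHom, h]
  simp [MonoidalCategory.tensorHom_def']

def act : ∀ n : ℕ, A.X ⊗ tensorPow A.X (n + 1) ⟶ tensorPow A.X (n + 1)
  | 0 => A.mul
  | n + 1 => actT A (act n) A.mul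

theorem act_isAct : ∀ n : ℕ, IsAct A (act A n)
  | 0 => A.mul_assoc
  | n + 1 => isAct_actT A _ _ (act_isAct n) A.mul_assoc

theorem lmul_one_mul : lmul A A.one A.mul = 𝟙 _ := by
  unfold lmul; rw [A.one_mul]; simp

theorem lmul_act_one : ∀ n : ℕ, lmul A A.one (act A n) = 𝟙 _
  | 0 => lmul_one_mul A
  | n + 1 => by
      change lmul A A.one (actT A (act A n) A.mul) = 𝟙 (tensorPow A.X (n + 1) ⊗ A.X)
      rw [lmul_actT A _ A.one_comul, lmul_act_one n, lmul_one_mul]; simp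

theorem act_one (n : ℕ) : A.one ▷ _ ≫ act A n = (λ_ _).hom := by
  have := lmul_act_one A n
  unfold lmul at this
  rw [Iso.inv_comp_eq] at this
  simpa using this

theorem lmul_act_diag (σ : 𝟙_ C ⟶ A.X) (hσ : σ ≫ A.comul = (λ_ (𝟙_ C)).inv ≫ (σ ⊗ₘ σ)) :
    ∀ n : ℕ, lmul A σ (act A n) = diagOp A.X (lmul A σ A.mul) n
  | 0 => rfl
  | n + 1 => by
      change lmul A σ (actT A (act A n) A.mul) = (diagOp A.X (lmul A σ A.mul) n ⊗ₘ _)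
      rw [lmul_actT A _ hσ, lmul_act_diag σ hσ n]

theorem aux1 {Q Q' : C} (i : A.X ⟶ Q) (c : A.X ⊗ Q ⟶ Q') (i' : A.X ⟶ Q')
    (h : i' = A.comul ≫ A.X ◁ i ≫ c) :
    A.comul ≫ A.X ◁ (A.comul ≫ i ▷ A.X) ≫ (α_ A.X Q A.X).inv ≫ c ▷ A.X =
      A.comul ≫ i' ▷ A.X := by
  have hc : A.comul ≫ A.X ◁ A.comul ≫ (α_ A.X A.X A.X).inv = A.comul ≫ A.comul ▷ A.X := by
    rw [← reassoc_of% A.comul_assoc]; simp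
  subst h
  simp only [whiskerLeft_comp, comp_whiskerRight, Category.assoc]
  rw [← reassoc_of% hc]
  simp

theorem aux2 {Q : C} (i : A.X ⟶ Q) (m : Q ⊗ Q ⟶ Q) :
    actT A (i ▷ Q ≫ m) A.mul =
      (A.comul ≫ i ▷ A.X) ▷ (Q ⊗ A.X) ≫ tensorμ Q A.X Q A.X ≫ (m ⊗ₘ A.mul) := by
  unfold actT
  have nn := tensorμ_natural_left i (𝟙 A.X) Q A.X
  rw [tensorHom_id, id_whiskerRight] at nn
  rw [comp_whiskerRight_assoc, reassoc_of% nn, tensorHom_comp_tensorHom, Category.id_comp]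

theorem aux3 {Q Q2 W Z : C} (σ : 𝟙_ C ⟶ A.X) (c : Q2 ⟶ A.X ⊗ Q) (t : A.X ⟶ A.X) (i : A.X ⟶ W)
    (m : W ⊗ (Q ⊗ A.X) ⟶ Z) :
    c ≫ ((t ≫ i) ⊗ₘ ((ρ_ Q).inv ≫ Q ◁ σ)) ≫ m =
      (ρ_ Q2).inv ≫ Q2 ◁ σ ≫ (c ▷ A.X ≫ (α_ A.X Q A.X).hom) ≫
        t ▷ (Q ⊗ A.X) ≫ i ▷ (Q ⊗ A.X) ≫ m := by
  simp only [Category.assoc]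
  rw [whisker_exchange_assoc, ← rightUnitor_inv_naturality_assoc]
  simp [MonoidalCategory.tensorHom_def']

theorem aux4 {Q Q2 : C} (σ : 𝟙_ C ⟶ A.X) (c : Q2 ⟶ A.X ⊗ Q) (t r : A.X ⟶ A.X)
    (a : A.X ⊗ Q ⟶ Q) (p : Q ⊗ A.X ⟶ Q)
    (h : a ≫ (ρ_ Q).inv ≫ Q ◁ σ ≫ p = (β_ A.X Q).hom ≫ Q ◁ (t ≫ r) ≫ p) :
    ((c ≫ (β_ A.X Q).hom) ≫ Q ◁ (t ≫ t ≫ r)) ≫ p =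
      (c ≫ t ▷ Q ≫ a) ≫ (ρ_ Q).inv ≫ Q ◁ σ ≫ p := by
  simp only [Category.assoc]
  rw [h, BraidedCategory.braiding_naturality_left_assoc, ← whiskerLeft_comp_assoc]

theorem aux5 {Q : C} (c : A.X ⊗ Q ≅ Q ⊗ A.X) (Y : Q ⟶ Q) (p : Q ⊗ A.X ⟶ Q)
    (hU : ((λ_ Q).inv ≫ A.one ▷ Q ≫ c.hom) ≫ p = 𝟙 Q) :
    ((λ_ Q).inv ≫ A.one ▷ Q ≫ c.hom) ≫ (c.inv ≫ (β_ A.X Q).hom) ≫ Y ▷ A.X ≫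
      ((β_ Q A.X).hom ≫ c.hom) ≫ p = Y := by
  calc _ = Y ≫ ((λ_ Q).inv ≫ A.one ▷ Q ≫ c.hom) ≫ p := by
        simp only [Category.assoc, Iso.hom_inv_id_assoc]
        rw [BraidedCategory.braiding_naturality_left_assoc, whisker_exchange_assoc,
          BraidedCategory.braiding_naturality_right_assoc]
        simp
    _ = Y := by rw [hU, Category.comp_id]

theorem iterComul_succ' : ∀ n : ℕ, A.iterComul (n + 1) = A.comul ≫ A.iterComul n ▷ A.X
  | 0 => by
      change A.comul ≫ A.X ◁ 𝟙 A.X ≫ 𝟙 (A.X ⊗ A.X) = A.comul ≫ 𝟙 A.X ▷ A.X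
      simp
  | n + 1 => by
      have ih := iterComul_succ' n
      change A.comul ≫ A.X ◁ A.iterComul (n + 1) ≫
        (α_ A.X (tensorPow A.X (n + 1)) A.X).inv ≫ (tensorPowCons A.X (n + 1)).hom ▷ A.X =
        A.comul ≫ A.iterComul (n + 1) ▷ A.X
      exact (congrArg (fun z : A.X ⟶ tensorPow A.X (n + 1) ⊗ A.X => A.comul ≫ A.X ◁ z ≫
        (α_ A.X (tensorPow A.X (n + 1)) A.X).inv ≫
          (tensorPowCons A.X (n + 1)).hom ▷ A.X) ih).trans
        (aux1 A (A.iterComul n) (tensorPowCons A.X (n + 1)).hom _ rfl)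

theorem act_eq : ∀ n : ℕ, act A n = A.iterComul n ▷ _ ≫ A.iterMul n
  | 0 => by
      change A.mul = 𝟙 A.X ▷ A.X ≫ A.mul
      simp
  | n + 1 => by
      have ih := act_eq n
      rw [iterComul_succ']
      change actT A (act A n) A.mul = (A.comul ≫ A.iterComul n ▷ A.X) ▷ (tensorPow A.X (n + 1) ⊗ A.X) ≫ A.iterMul (n + 1)
      have h : A.iterMul (n + 1) = tensorμ (tensorPow A.X (n + 1)) A.X (tensorPow A.X (n + 1)) A.X ≫
        (A.iterMul n ⊗ₘ A.mul) := by
        simp only [tensorμ, Category.assoc]; rfl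
      rw [h, ih]
      exact aux2 A _ _

theorem cons_act : ∀ n : ℕ, A.X ◁ (tensorPowCons A.X (n + 1)).hom ≫ act A (n + 1) =
    actT A A.mul (act A n) ≫ (tensorPowCons A.X (n + 1)).hom
  | 0 => by
      change A.X ◁ 𝟙 (A.X ⊗ A.X) ≫ actT A A.mul A.mul = actT A A.mul A.mul ≫ 𝟙 (A.X ⊗ A.X)
      simp
  | n + 1 => by
      have ih := cons_act n
      change A.X ◁ ((α_ A.X (tensorPow A.X (n + 1)) A.X).inv ≫
        (tensorPowCons A.X (n + 1)).hom ▷ A.X) ≫ actT A (act A (n + 1)) A.mul = 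
        actT A A.mul (actT A (act A n) A.mul) ≫ (α_ A.X (tensorPow A.X (n + 1)) A.X).inv ≫
        (tensorPowCons A.X (n + 1)).hom ▷ A.X
      rw [whiskerLeft_comp, Category.assoc, actT_natural A _ _ _ _ ih]
      have h := actT_assoc A A.mul (act A n) A.mul
      have h' : A.X ◁ (α_ A.X (tensorPow A.X (n + 1)) A.X).inv ≫
          actT A (actT A A.mul (act A n)) A.mul =
          actT A A.mul (actT A (act A n) A.mul) ≫ (α_ A.X (tensorPow A.X (n + 1)) A.X).inv := by
        rw [← cancel_mono (α_ A.X (tensorPow A.X (n + 1)) A.X).hom]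
        simp only [Category.assoc, h, Iso.inv_hom_id, Category.comp_id]
        rw [← whiskerLeft_comp_assoc]; simp
      rw [reassoc_of% h']

variable (δ : A.X ⟶ 𝟙_ C) (σ : 𝟙_ C ⟶ A.X)

def pp (n : ℕ) : tensorPow A.X (n + 2) ⟶ tensorPow A.X (n + 1) :=
  (tensorPowCons A.X (n + 1)).inv ≫ A.twist δ ▷ _ ≫ act A n

theorem pp_inv (hδ : A.IsCharacter δ) (n : ℕ) :
    act A (n + 1) ≫ pp A δ n = δ ▷ _ ≫ (λ_ _).hom ≫ pp A δ n := by
  have h : act A (n + 1) ≫ (tensorPowCons A.X (n + 1)).inv =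
      A.X ◁ (tensorPowCons A.X (n + 1)).inv ≫ actT A A.mul (act A n) := by
    rw [Iso.comp_inv_eq, Category.assoc, ← cons_act, ← whiskerLeft_comp_assoc]; simp
  unfold pp
  rw [reassoc_of% h, keyA A δ hδ _ (act_isAct A n) (act_one A n), whisker_exchange_assoc,
    leftUnitor_naturality_assoc]

theorem cyclicOp_eq : ∀ n : ℕ, A.cyclicOp δ σ n = (ρ_ _).inv ≫ tensorPow A.X (n + 1) ◁ σ ≫ pp A δ n
  | 0 => by
      change (ρ_ A.X).inv ≫ ((A.twist δ ≫ 𝟙 A.X) ⊗ₘ σ) ≫ A.mul =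
        (ρ_ A.X).inv ≫ A.X ◁ σ ≫ 𝟙 (A.X ⊗ A.X) ≫ A.twist δ ▷ A.X ≫ A.mul
      simp [MonoidalCategory.tensorHom_def']
  | n + 1 => by
      unfold pp
      rw [act_eq]
      change (tensorPowCons A.X (n + 1)).inv ≫
        ((A.twist δ ≫ A.iterComul (n + 1)) ⊗ₘ ((ρ_ (tensorPow A.X (n + 1))).inv ≫
          (tensorPow A.X (n + 1) ◁ σ))) ≫ A.iterMul (n + 1) =
        (ρ_ (tensorPow A.X (n + 2))).inv ≫ tensorPow A.X (n + 2) ◁ σ ≫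
          ((tensorPowCons A.X (n + 1)).inv ▷ A.X ≫ (α_ A.X (tensorPow A.X (n + 1)) A.X).hom) ≫
          A.twist δ ▷ (tensorPow A.X (n + 1) ⊗ A.X) ≫
          A.iterComul (n + 1) ▷ (tensorPow A.X (n + 1) ⊗ A.X) ≫ A.iterMul (n + 1)
      exact aux3 A σ _ _ _ _

theorem lmul_lmul (g h : 𝟙_ C ⟶ A.X) :
    lmul A g A.mul ≫ lmul A h A.mul = lmul A ((λ_ (𝟙_ C)).inv ≫ (h ⊗ₘ g) ≫ A.mul) A.mul := by
  unfold lmul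
  simp only [comp_whiskerRight, Category.assoc, A.mul_assoc, MonoidalCategory.tensorHom_def']
  rw [leftUnitor_inv_naturality_assoc, whisker_exchange_assoc]
  simp

theorem bmpi_key (hσ : A.IsCocharacter σ) (hb : A.IsBMPI δ σ) :
    A.twist δ ≫ A.twist δ ≫ rmul A σ = lmul A σ A.mul := by
  have h2 := hb.2
  have e : A.bmpiMap δ σ = (A.twist δ ≫ A.twist δ ≫ rmul A σ) ≫ lmul A (σ ≫ A.antipode) A.mul := by
    unfold HopfObj.bmpiMap lmul
    calc _ = A.twist δ ≫ A.twist δ ≫ (λ_ A.X).inv ≫ (σ ≫ A.antipode) ▷ A.X ≫ A.mul ≫ rmul A σ := by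
          unfold rmul
          rw [MonoidalCategory.tensorHom_def']
          simp only [Category.assoc]
          rw [← leftUnitor_inv_naturality_assoc, whisker_exchange_assoc,
            rightUnitor_inv_naturality_assoc A.mul]
          simp only [Category.assoc]
      _ = _ := by
          rw [← mul_rmul, ← whisker_exchange_assoc, ← leftUnitor_inv_naturality_assoc]
          unfold rmul
          simp only [Category.assoc]
  have e2 : lmul A (σ ≫ A.antipode) A.mul ≫ lmul A σ A.mul = 𝟙 _ := by
    rw [lmul_lmul, ← lmul_one_mul A]
    congr 1
    have := congrArg (fun z => σ ≫ z) A.antipode_right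
    simp only [reassoc_of% hσ.1, reassoc_of% hσ.2] at this
    rw [← this]
    simp [MonoidalCategory.tensorHom_def]
  rw [e] at h2
  have := congrArg (fun z => z ≫ lmul A σ A.mul) h2
  simp only [Category.assoc, e2, Category.comp_id, Category.id_comp] at this
  exact this

theorem trot_pp (hδ : A.IsCharacter δ) (hσ : A.IsCocharacter σ) (hb : A.IsBMPI δ σ) (n : ℕ) :
    trot A.X (lmul A σ A.mul) n ≫ pp A δ n = pp A δ n ≫ A.cyclicOp δ σ n := by
  have h := keyB A δ σ (act A n) (pp A δ n) (pp_inv A δ hδ n)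
  rw [cyclicOp_eq, ← bmpi_key A δ σ hσ hb]
  exact aux4 A σ (tensorPowCons A.X (n + 1)).inv (A.twist δ) (rmul A σ) (act A n) (pp A δ n) h

theorem pow_comm {M N : C} (f : M ⟶ M) (g : N ⟶ N) (p : M ⟶ N) (h : f ≫ p = p ≫ g) :
    ∀ n, endoPow f n ≫ p = p ≫ endoPow g n
  | 0 => by simp [endoPow]
  | n + 1 => by simp [endoPow, pow_comm f g p h n, reassoc_of% h]

theorem main (hδ : A.IsCharacter δ) (hσ : A.IsCocharacter σ) (hb : A.IsBMPI δ σ) (n : ℕ) :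
    endoPow (A.cyclicOp δ σ n) (n + 2) = endoPow (tensorPowBraid A.X n) (n + 1) := by
  let U : tensorPow A.X (n + 1) ⟶ tensorPow A.X (n + 2) :=
    (λ_ _).inv ≫ A.one ▷ _ ≫ (tensorPowCons A.X (n + 1)).hom
  have hU : U ≫ pp A δ n = 𝟙 _ := by
    simp only [U, pp, Category.assoc, Iso.hom_inv_id_assoc]
    rw [← comp_whiskerRight_assoc, one_twist A δ hδ, act_one]; simp
  have e := pow_comm _ _ _ (trot_pp A δ σ hδ hσ hb n) (n + 2)
  rw [trot_pow] at e
  have hd : diagOp A.X (lmul A σ A.mul) (n + 1) ≫ pp A δ n = pp A δ n := by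
    rw [← lmul_act_diag A σ hσ.1]
    unfold lmul
    simp only [Category.assoc]
    rw [pp_inv A δ hδ, ← comp_whiskerRight_assoc, hb.1]; simp
  simp only [Category.assoc, hd] at e
  have e' := congrArg (fun z => U ≫ z) e
  simp only [reassoc_of% hU] at e'
  rw [← e']
  exact aux5 A (tensorPowCons A.X (n + 1)) _ (pp A δ n) hU

end Hopf3
end BH

/-- For a braided modular pair in involution `(δ, σ)` and every
`n ≥ 1`, the `(n+1)`-fold composite of `τ_n` equals the `n`-fold composite of `Ψ_n`
(here stated for `τ_{n+1}` and `Ψ_{n+1}`, for all `n : ℕ`). -/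
theorem HopfObj.cyclicOp_pow_eq_braid_pow (A : _root_.HopfObj C)
    (δ : A.X ⟶ 𝟙_ C) (σ : 𝟙_ C ⟶ A.X)
    (hδ : A.IsCharacter δ) (hσ : A.IsCocharacter σ) (hbmpi : A.IsBMPI δ σ) :
    ∀ n : ℕ, endoPow (A.cyclicOp δ σ n) (n + 2) =
      endoPow (tensorPowBraid A.X n) (n + 1) := by
  exact fun n => BH.main A δ σ hδ hσ hbmpi n
end
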